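/- There exist groups G and H, both finitely generated and residually finite, such that: (1) G and H have the same finite quotients (for every finite group F, there is a surjective homomorphism G → F if and only if there is a surjective homomorphism H → F); (2) every injective group homomorphism G → G is surjective (G is co-Hopfian); and (3) there exists an injective but non-surjective group homomorphism H → H (H is not co-Hopfian). -/

import Mathlib

/-!
Both groups are built from finite sets `X n` of equal sizes. On each `X n`, a discrete torus, there
are two commuting unit translations and five marked points near the origin. The group of such a
datum (`CoHopf.Datum.Γ`) is the subgroup of `(∏ n, Sym (X n)) × ℤ²` generated by the two diagonal
translations `T`, `U`, each with its own integer coordinate, and the diagonal three-cycles on marked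
points. It is residually finite and contains every factor `Alt (X n)` (`single_mem`). Conjugating by
large powers of `T` shows that a finite quotient factors through finitely many coordinates and `ℤ²`
(`kills`, `finite_quotient_iff`), so that the finite quotients depend only on the sizes of the sets
`X n`.

For tori with sides `N' n` and `2`, the square of `U` acts trivially in all coordinates, so tripling
the integer coordinate of `U` is an injective endomorphism that is not surjective
(`exists_not_surjective`).

For square tori with sides `N n = (n + 4)!`, every injective endomorphism `φ` is surjective. Every
element acts on the tori as a translation perturbed on a square of bounded size. Hence the orbits of
the image of `T` control the action through `φ` on the `m`-th torus: if the factor `Alt (X m)` were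
to die there, so would almost all smaller factors (`off_diag_trivial`), and `φ` would have a kernel
(`diag_injective`). As `Alt (X m)` has trivial centralizer, the action on the `m`-th torus through
`φ` depends only on the `m`-th coordinate (`co_eq`), and for large `m` it is given by conjugation
with a permutation `h m` of the torus, because the images of three-cycles have bounded support
(`exists_conj`, `exists_conjugators`). Comparing which powers of translations and of their images
have fixed points, one sees that the induced endomorphism of `ℤ²` is invertible modulo every prime
(`dvd_of_dvd`), hence bijective (`v_phi_surjective`). It follows that the permutations `h m` map a
given point of the grid `ℤ²` to within a distance of the origin bounded independently of `m`
(`conjugators_local`). So a translate of a diagonal three-cycle is conjugated, for infinitely many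
`m`, into one and the same three-cycle; up to finitely many coordinates it is therefore the image of
an element (`tc_mem_range`), and finitely many coordinates do not matter since the image contains
all the factors `Alt (X n)` (`single_mem_range`).
-/

/-- A group is co-Hopfian if every injective endomorphism is surjective. -/
def IsCoHopfian (G : Type*) [Group G] : Prop :=
  ∀ f : G →* G, Function.Injective f → Function.Surjective f

/-- A group is residually finite if every nontrivial element survives in some
finite quotient (i.e. admits a homomorphism to a finite group not killing it). -/
def IsResiduallyFinite (G : Type*) [Group G] : Prop :=
  ∀ g : G, g ≠ 1 → ∃ (F : Type) (_ : Group F) (_ : Finite F) (φ : G →* F), φ g ≠ 1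

/-- Two groups have the same finite quotients if every finite group is a quotient of
one iff it is a quotient of the other. -/
def SameFiniteQuotients (G H : Type*) [Group G] [Group H] : Prop :=
  ∀ (F : Type) [Group F] [Finite F],
    (∃ f : G →* F, Function.Surjective f) ↔ ∃ f : H →* F, Function.Surjective f

/-! ### Three-cycles -/

namespace CoHopf
open Equiv Equiv.Perm

/-- The three-cycle `a ↦ b ↦ c ↦ a`, when `a`, `b`, `c` are distinct. -/
def tc {X : Type*} [DecidableEq X] (a b c : X) : Perm X := swap a b * swap b c

section tc
variable {X : Type*} [DecidableEq X]

lemma tc_conj (g : Perm X) (a b c : X) : g * tc a b c * g⁻¹ = tc (g a) (g b) (g c) := by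
  simp only [tc, swap_apply_apply]
  group

lemma tc_inv (a b c : X) : (tc a b c)⁻¹ = tc c b a := by
  simp [tc, swap_comm]

lemma tc_rot {a b c : X} (hab : a ≠ b) (hbc : b ≠ c) (hac : a ≠ c) : tc a b c = tc b c a := by
  ext p
  simp only [tc, Perm.mul_apply, swap_apply_def]
  grind

lemma tc_apply {a b c : X} (hab : a ≠ b) (hac : a ≠ c) : tc a b c a = b := by
  simp [tc, swap_apply_of_ne_of_ne hab hac]

lemma tc_apply_of_ne {a b c p : X} (ha : p ≠ a) (hb : p ≠ b) (hc : p ≠ c) : tc a b c p = p := by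
  simp [tc, swap_apply_of_ne_of_ne ha hb, swap_apply_of_ne_of_ne hb hc]

lemma tc_pow_three {a b c : X} (hab : a ≠ b) (hbc : b ≠ c) (hac : a ≠ c) : tc a b c ^ 3 = 1 := by
  ext p
  simp only [tc, pow_succ, pow_zero, one_mul, Perm.mul_apply, swap_apply_def, Perm.one_apply]
  grind

lemma sign_tc [Fintype X] {a b c : X} (hab : a ≠ b) (hbc : b ≠ c) : sign (tc a b c) = 1 := by
  simp [tc, sign_swap hab, sign_swap hbc]

lemma tc_apply₂ {a b c : X} (hbc : b ≠ c) (hac : a ≠ c) : tc a b c b = c := by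
  simp [tc, swap_apply_of_ne_of_ne hac.symm hbc.symm]

lemma tc_apply₃ {a b c : X} : tc a b c c = a := by
  simp [tc]

lemma tc_ne_one {a b c : X} (hab : a ≠ b) (hac : a ≠ c) : tc a b c ≠ 1 := by
  intro h
  have := tc_apply hab hac
  rw [h] at this
  exact hab this

/-- Three-cycles are commutators of three-cycles as soon as two further points are available. -/
lemma tc_commutator {a b c d e : X} (hab : a ≠ b) (hac : a ≠ c) (had : a ≠ d) (hae : a ≠ e)
    (hbc : b ≠ c) (hbe : b ≠ e) (hcd : c ≠ d) (hce : c ≠ e) (hde : d ≠ e) :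
    tc a b d * tc a c e * (tc a b d)⁻¹ * (tc a c e)⁻¹ = tc a b c := by
  rw [tc_conj, tc_inv, tc_apply hab had, tc_apply_of_ne hac.symm hbc.symm hcd,
    tc_apply_of_ne hae.symm hbe.symm hde.symm]
  ext p
  simp only [tc, Perm.mul_apply, swap_apply_def]
  grind

/-- `x` and `y` are linked by `S` if they are equal or lie on a common three-cycle in `S`. -/
def Linked (S : Subgroup (Perm X)) (x y : X) : Prop :=
  x = y ∨ ∃ z, x ≠ y ∧ y ≠ z ∧ x ≠ z ∧ tc x y z ∈ S

lemma Linked.of_tc {S : Subgroup (Perm X)} {x y z : X} (hxy : x ≠ y) (hyz : y ≠ z) (hxz : x ≠ z)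
    (h : tc x y z ∈ S) : Linked S x y := .inr ⟨z, hxy, hyz, hxz, h⟩

lemma Linked.symm {S : Subgroup (Perm X)} {x y : X} (h : Linked S x y) : Linked S y x := by
  obtain rfl | ⟨z, hxy, hyz, hxz, h⟩ := h
  · exact .inl rfl
  · refine .inr ⟨z, hxy.symm, hxz, hyz, ?_⟩
    rw [tc_rot hxy.symm hxz hyz, tc_rot hxz hyz.symm hxy, ← tc_inv]
    exact S.inv_mem h

lemma tc_conj_mem {S : Subgroup (Perm X)} {g : Perm X} (hg : g ∈ S) {a b c : X}
    (h : tc a b c ∈ S) : tc (g a) (g b) (g c) ∈ S := by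
  rw [← tc_conj]
  exact S.mul_mem (S.mul_mem hg h) (S.inv_mem hg)

lemma Linked.map {S : Subgroup (Perm X)} {g : Perm X} (hg : g ∈ S) {x y : X} (h : Linked S x y) :
    Linked S (g x) (g y) := by
  obtain rfl | ⟨z, hxy, hyz, hxz, h⟩ := h
  · exact .inl rfl
  · exact .inr ⟨g z, by simpa, by simpa, by simpa, tc_conj_mem hg h⟩

lemma Linked.trans {S : Subgroup (Perm X)} {x y w : X} (h : Linked S x y) (h' : Linked S y w) :
    Linked S x w := by
  obtain rfl | ⟨z, hxy, hyz, hxz, h⟩ := h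
  · exact h'
  obtain rfl | ⟨v, hyw, hwv, hyv, h'⟩ := h'
  · exact .inr ⟨z, hxy, hyz, hxz, h⟩
  by_cases hxw : x = w
  · exact .inl hxw
  by_cases hxv : x = v
  · subst hxv
    rw [tc_rot hyw hwv hyv, tc_rot hwv hyv.symm hyw.symm, ← tc_rot hwv hyv.symm hyw.symm] at h'
    exact (Linked.of_tc hwv hyv.symm hyw.symm h').symm
  · -- conjugating `(x y z)` by `(y w v)` gives a three-cycle starting with `x w`
    have := tc_conj_mem h' h
    rw [tc_apply hyw hyv, tc_apply_of_ne hxy hxw hxv] at this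
    refine .inr ⟨_, hxw, ?_, ?_, this⟩
    · intro h
      exact hyz ((tc y w v).injective ((tc_apply hyw hyv).trans h))
    · intro h
      have h2 : tc y w v x = tc y w v z := by rwa [tc_apply_of_ne hxy hxw hxv]
      exact hxz ((tc y w v).injective h2)

/-- If a subgroup links any two points by its three-cycles then it contains all three-cycles. -/
lemma tc_mem_of_linked {S : Subgroup (Perm X)} (H : ∀ x y, Linked S x y) {x y z : X}
    (hxy : x ≠ y) (hyz : y ≠ z) (hxz : x ≠ z) : tc x y z ∈ S := by
  obtain h | ⟨w, -, hyw, hxw, h⟩ := H x y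
  · exact absurd h hxy
  by_cases hwz : w = z
  · exact hwz ▸ h
  obtain h' | ⟨u, -, hzu, hwu, h'⟩ := H w z
  · exact absurd h' hwz
  by_cases hux : u = x
  · subst hux
    have := tc_conj_mem (S.inv_mem h') h
    rw [tc_inv, tc_apply hzu.symm hwu.symm, tc_apply_of_ne hxy.symm hyz hyw,
      tc_apply₃] at this
    rw [← inv_mem_iff, tc_inv]
    exact this
  by_cases huy : u = y
  · subst huy
    have := tc_conj_mem (S.inv_mem h') h
    rw [tc_inv, tc_apply hyz hyw, tc_apply_of_ne hxy hxz hxw,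
      tc_apply₃] at this
    rw [← inv_mem_iff, tc_inv, tc_rot hyz.symm hxy.symm hxz.symm, tc_rot hxy.symm hxz hyz,
      ]
    exact this
  have := tc_conj_mem h' h
  rwa [tc_apply hwz hwu, tc_apply_of_ne hxw hxz (Ne.symm hux),
    tc_apply_of_ne hyw hyz (Ne.symm huy)] at this

lemma isThreeCycle_tc [Fintype X] {a b c : X} (hab : a ≠ b) (hbc : b ≠ c) (hac : a ≠ c) :
    (tc a b c).IsThreeCycle := by
  rw [tc, swap_comm a b]
  exact isThreeCycle_swap_mul_swap_same hab.symm hbc hac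

lemma exists_tc_of_isThreeCycle [Fintype X] {g : Perm X} (h : g.IsThreeCycle) :
    ∃ a b c, a ≠ b ∧ b ≠ c ∧ a ≠ c ∧ g = tc a b c := by
  obtain ⟨a, ha⟩ : g.support.Nonempty := by
    rw [← Finset.card_pos, h.card_support]; norm_num
  have ha' := (h.eq_swap_mul_swap_iff_mem_support (a := a)).2 ha
  have h1 : g a ≠ a := mem_support.1 ha
  refine ⟨a, g a, g (g a), h1.symm, fun h2 => h1 (g.injective h2).symm, fun h3 => ?_, ha'⟩
  have h4 : g = 1 := by rw [ha', ← h3, swap_comm (g a) a, swap_mul_self]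
  exact h1 (by rw [h4]; rfl)

lemma alternatingGroup_le_of_linked [Fintype X] {S : Subgroup (Perm X)}
    (H : ∀ x y, Linked S x y) : alternatingGroup X ≤ S := by
  rw [← closure_three_cycles_eq_alternating, Subgroup.closure_le]
  intro g hg
  obtain ⟨a, b, c, hab, hbc, hac, rfl⟩ := exists_tc_of_isThreeCycle hg
  exact tc_mem_of_linked H hab hbc hac

end tc
end CoHopf

/-! ### Injective homomorphisms from an alternating group to the symmetric group of the same set -/

namespace CoHopf
open Equiv Equiv.Perm

/-- A finite simple group acting on a set with an invariant subset too small to carry a faithful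
action fixes that subset pointwise. -/
lemma fix_of_card {K Z : Type*} [Group K] [IsSimpleGroup K] [Finite K]
    (τ : K →* Perm Z) (S : Finset Z) (hS : ∀ k, ∀ y ∈ S, τ k y ∈ S)
    (hc : S.card.factorial < Nat.card K) (k : K) {y : Z} (hy : y ∈ S) : τ k y = y := by
  have hiff : ∀ k y, τ k y ∈ S ↔ y ∈ S := fun k y =>
    ⟨fun h => by simpa [← Perm.mul_apply, ← map_mul] using hS k⁻¹ _ h, hS k y⟩
  let ρ : K →* Perm {y // y ∈ S} :=
    { toFun := fun k => (τ k).subtypePerm (hiff k)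
      map_one' := by ext; simp
      map_mul' := fun a b => by
        ext p
        change τ (a * b) p.1 = τ a (τ b p.1)
        rw [map_mul, Perm.mul_apply] }
  have hker : ρ.ker = ⊤ := by
    refine (ρ.normal_ker.eq_bot_or_eq_top).resolve_left fun h => ?_
    classical
    have hinj := (MonoidHom.ker_eq_bot_iff ρ).1 h
    have h1 := Nat.card_le_card_of_injective ρ hinj
    rw [Nat.card_perm, Nat.card_eq_finsetCard] at h1
    omega
  have hk : ρ k = 1 := by
    rw [← MonoidHom.mem_ker, hker]; trivial
  have := congrArg (fun e : Perm {y // y ∈ S} => (e ⟨y, hy⟩ : Z)) hk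
  simpa [ρ] using this

section aut
variable {X : Type*} [DecidableEq X] [Fintype X]

lemma card_alt_finset (s : Finset X) (hs : 2 ≤ s.card) :
    2 * Nat.card (alternatingGroup s) = s.card.factorial := by
  have : Nontrivial s := by
    rw [← Fintype.one_lt_card_iff_nontrivial, Fintype.card_coe]; omega
  rw [two_mul_nat_card_alternatingGroup, Nat.card_perm, Nat.card_eq_fintype_card, Fintype.card_coe]

lemma two_mul_card_alt (h : 2 ≤ Fintype.card X) :
    2 * Nat.card (alternatingGroup X) = (Fintype.card X).factorial := by
  have : Nontrivial X := by
    rw [← Fintype.one_lt_card_iff_nontrivial]; omega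
  rw [two_mul_nat_card_alternatingGroup, Nat.card_perm, Nat.card_eq_fintype_card]

lemma two_mul_factorial_lt {a b : ℕ} (h : a < b) (hb : 3 ≤ b) :
    2 * a.factorial < b.factorial := by
  obtain ⟨c, rfl⟩ : ∃ c, b = c + 1 := ⟨b - 1, by omega⟩
  rw [Nat.factorial_succ]
  have h1 := Nat.factorial_le (show a ≤ c by omega)
  have h2 := Nat.factorial_pos c
  nlinarith

lemma simple_alt_finset {X : Type*} [DecidableEq X] {s : Finset X} (hs : 5 ≤ s.card) :
    IsSimpleGroup (alternatingGroup s) :=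
  alternatingGroup.isSimpleGroup (by rwa [Nat.card_eq_fintype_card, Fintype.card_coe])

/-- The point stabilizer in the alternating group. -/
def Stab (x : X) : Subgroup (alternatingGroup X) :=
  (alternatingGroup.ofSubtype ({x}ᶜ : Finset X)).range

lemma mem_stab {x : X} {k : alternatingGroup X} : k ∈ Stab x ↔ k.1 x = x := by
  rw [Stab, alternatingGroup.mem_range_ofSubtype_iff]
  rw [Finset.subset_compl_comm, Finset.singleton_subset_iff, Finset.mem_compl, mem_support, not_not]

variable {σ : alternatingGroup X →* Perm X}

/-- A subset of size at most `n - 2` invariant under a point stabilizer is fixed pointwise. -/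
lemma stab_fix (h8 : 8 ≤ Fintype.card X) {x : X} (S : Finset X)
    (hS : ∀ k ∈ Stab x, ∀ y ∈ S, σ k y ∈ S) (hc : S.card + 2 ≤ Fintype.card X)
    {k : alternatingGroup X} (hk : k ∈ Stab x) {y : X} (hy : y ∈ S) : σ k y = y := by
  have hcard : ({x}ᶜ : Finset X).card = Fintype.card X - 1 := by
    rw [Finset.card_compl, Finset.card_singleton]
  have := simple_alt_finset (s := ({x}ᶜ : Finset X)) (by omega)
  obtain ⟨k, rfl⟩ := hk
  refine fix_of_card (σ.comp (alternatingGroup.ofSubtype ({x}ᶜ : Finset X))) S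
    (fun k y hy => hS _ ⟨k, rfl⟩ y hy) ?_ k hy
  have h1 := card_alt_finset ({x}ᶜ : Finset X) (by omega)
  have h2 := two_mul_factorial_lt (a := S.card) (b := ({x}ᶜ : Finset X).card) (by omega) (by omega)
  omega

lemma stab_nontrivial (h8 : 8 ≤ Fintype.card X) (x : X) : ∃ k ∈ Stab x, k ≠ 1 := by
  have hcard : ({x}ᶜ : Finset X).card = Fintype.card X - 1 := by
    rw [Finset.card_compl, Finset.card_singleton]
  have := simple_alt_finset (s := ({x}ᶜ : Finset X)) (by omega)
  obtain ⟨k, hk⟩ := exists_ne (1 : alternatingGroup ({x}ᶜ : Finset X))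
  exact ⟨_, ⟨k, rfl⟩, fun h => hk (alternatingGroup.ofSubtype_injective (by rw [h, map_one]))⟩

lemma stab_fix_unique (h8 : 8 ≤ Fintype.card X) (hσ : Function.Injective σ) {x y z : X}
    (hy : ∀ k ∈ Stab x, σ k y = y) (hz : ∀ k ∈ Stab x, σ k z = z) : y = z := by
  by_contra hne
  obtain ⟨k, hk, hk1⟩ := stab_nontrivial h8 x
  apply hk1
  apply hσ
  rw [map_one]
  ext p
  by_cases hpy : p = y
  · subst hpy; exact hy k hk
  by_cases hpz : p = z
  · subst hpz; exact hz k hk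
  refine stab_fix (S := ({y, z} : Finset X)ᶜ) h8 ?_ ?_ hk (by simp [hpy, hpz])
  · intro k hk q hq
    simp only [Finset.mem_compl, Finset.mem_insert, Finset.mem_singleton, not_or] at hq ⊢
    refine ⟨fun h => hq.1 ?_, fun h => hq.2 ?_⟩
    · exact (σ k).injective (h.trans (hy k hk).symm)
    · exact (σ k).injective (h.trans (hz k hk).symm)
  · rw [Finset.card_compl, Finset.card_pair hne]; omega

/-- If `a` is a three-cycle moving `x` whose image under `σ` has at least four fixed points, then
`σ` maps the stabilizer of `x` into the stabilizer of some point. -/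
lemma exists_stab_fix (h8 : 8 ≤ Fintype.card X) (hσ : Function.Injective σ) {x : X}
    {a : alternatingGroup X} (ha : a.1.IsThreeCycle) (hax : a.1 x ≠ x)
    (hc : (σ a).support.card + 4 ≤ Fintype.card X) : ∃ y, ∀ k ∈ Stab x, σ k y = y := by
  classical
  set s : Finset X := a.1.supportᶜ with hs
  have hscard : s.card = Fintype.card X - 3 := by
    rw [hs, Finset.card_compl, ha.card_support]
  have hsimp := simple_alt_finset (s := s) (by omega)
  have h1 := card_alt_finset s (by omega)
  -- the alternating group of the complement of `supp a` commutes with `a`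
  have hcomm : ∀ k ∈ (alternatingGroup.ofSubtype s).range, Commute k a := by
    intro k hk
    rw [alternatingGroup.mem_range_ofSubtype_iff] at hk
    have : Disjoint k.1 a.1 := by
      rw [disjoint_iff_disjoint_support, Finset.disjoint_left]
      intro p hp hp'
      have := hk hp
      rw [hs, Finset.mem_compl] at this
      exact this hp'
    exact Subtype.ext this.commute
  obtain ⟨y, hy⟩ : (σ a).support.Nonempty := by
    rw [Finset.nonempty_iff_ne_empty, Ne, support_eq_empty_iff, ← map_one σ, hσ.eq_iff]
    rintro rfl
    exact hax rfl
  have hyfix : ∀ k ∈ (alternatingGroup.ofSubtype s).range, σ k y = y := by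
    rintro _ ⟨k, rfl⟩
    refine fix_of_card (σ.comp (alternatingGroup.ofSubtype s)) (σ a).support ?_ ?_ k hy
    · intro k p hp
      have hk : Commute (σ (alternatingGroup.ofSubtype s k)) (σ a) := (hcomm _ ⟨k, rfl⟩).map σ
      rw [mem_support] at hp ⊢
      intro h
      apply hp
      apply (σ (alternatingGroup.ofSubtype s k)).injective
      rw [← Perm.mul_apply, hk.eq]
      exact h
    · have h2 := two_mul_factorial_lt (a := (σ a).support.card) (b := s.card) (by omega) (by omega)
      omega
  let act : MulAction (Stab x) X := MulAction.compHom X (σ.comp (Stab x).subtype)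
  have hact : ∀ (k : Stab x) (p : X), k • p = σ k.1 p := fun k p => rfl
  set O : Finset X := Finset.univ.filter (fun p => p ∈ MulAction.orbit (Stab x) y) with hO
  have hOinv : ∀ k ∈ Stab x, ∀ p, σ k p ∈ O ↔ p ∈ O := by
    intro k hk p
    rw [hO, Finset.mem_filter, Finset.mem_filter, and_iff_right (Finset.mem_univ _),
      and_iff_right (Finset.mem_univ _), ← hact ⟨k, hk⟩ p, ← MulAction.orbit_eq_iff,
      ← MulAction.orbit_eq_iff, MulAction.orbit_smul]
  have hyO : y ∈ O := by simp [hO]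
  have hOcard : O.card ≠ Fintype.card X := by
    intro h
    have h3 := (MulAction.stabilizer (Stab x) y).index_mul_card
    have h4 : (MulAction.orbit (Stab x) y).ncard = O.card := by
      rw [← Set.ncard_coe_finset, hO]
      congr 1
      ext p; simp
    rw [MulAction.index_stabilizer, h4, h] at h3
    have hle : (alternatingGroup.ofSubtype s).range ≤ Stab x := by
      intro k hk
      rw [mem_stab]
      rw [alternatingGroup.mem_range_ofSubtype_iff] at hk
      by_contra hkx
      have := hk (mem_support.2 hkx)
      rw [hs, Finset.mem_compl, mem_support] at this
      exact this hax
    have hdvd : Nat.card ((alternatingGroup.ofSubtype s).range.subgroupOf (Stab x)) ∣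
        Nat.card (MulAction.stabilizer (Stab x) y) := by
      refine Subgroup.card_dvd_of_le fun k hk => ?_
      rw [MulAction.mem_stabilizer_iff, hact]
      exact hyfix _ hk
    rw [Nat.card_congr (Subgroup.subgroupOfEquivOfLe hle).toEquiv] at hdvd
    have h5 := Nat.card_congr
      (MonoidHom.ofInjective (alternatingGroup.ofSubtype_injective (s := s))).toEquiv
    have h6 := Nat.card_congr (MonoidHom.ofInjective
      (alternatingGroup.ofSubtype_injective (s := ({x}ᶜ : Finset X)))).toEquiv
    have hcard : ({x}ᶜ : Finset X).card = Fintype.card X - 1 := by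
      rw [Finset.card_compl, Finset.card_singleton]
    have h7 := card_alt_finset ({x}ᶜ : Finset X) (by omega)
    obtain ⟨c, hc'⟩ := hdvd
    rw [hc', ← h5] at h3
    change _ = Nat.card (alternatingGroup.ofSubtype ({x}ᶜ : Finset X)).range at h3
    rw [← h6] at h3
    obtain ⟨q, hq⟩ : ∃ q, Fintype.card X = q + 3 := ⟨Fintype.card X - 3, by omega⟩
    rw [hscard, hq, Nat.add_sub_cancel] at h1
    rw [hcard, hq, show q + 3 - 1 = q + 1 + 1 from rfl, Nat.factorial_succ, Nat.factorial_succ,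
      ← h1] at h7
    rw [hq] at h3
    -- comparing orders, `n` divides `(n - 1) * (n - 2)`, hence divides `2`
    have h8 : (q + 3) * c = (q + 3) * q + 2 := by
      have hpos : 0 < Nat.card (alternatingGroup s) := Nat.card_pos
      apply Nat.eq_of_mul_eq_mul_left hpos
      nlinarith
    have h9 : q + 3 ∣ 2 := (Nat.dvd_add_right (Dvd.intro q rfl)).1 ⟨c, h8.symm⟩
    have := Nat.le_of_dvd (by norm_num) h9
    omega
  have hle : O.card ≤ Fintype.card X := Finset.card_le_univ O
  have hpos : 0 < O.card := Finset.card_pos.2 ⟨y, hyO⟩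
  have hcompl : Oᶜ.card = Fintype.card X - O.card := Finset.card_compl O
  by_cases h4 : O.card + 2 ≤ Fintype.card X
  · exact ⟨y, fun k hk => stab_fix h8 O (fun k hk p hp => (hOinv k hk p).2 hp) h4 hk hyO⟩
  · obtain ⟨z, hz⟩ : Oᶜ.Nonempty := Finset.card_pos.1 (by omega)
    refine ⟨z, fun k hk => stab_fix h8 Oᶜ (fun k hk p hp => ?_) (by omega) hk hz⟩
    rw [Finset.mem_compl] at hp ⊢
    exact fun h => hp ((hOinv k hk p).1 h)

/-- An injective homomorphism from the alternating group of `X` to the symmetric group of `X` is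
conjugation by a permutation, once every point is moved by a three-cycle whose image has at least
four fixed points.  The permutation matches each point with the point fixed by the image of its
stabilizer. -/
lemma exists_conj (h8 : 8 ≤ Fintype.card X) (hσ : Function.Injective σ)
    (H : ∀ x, ∃ a : alternatingGroup X, a.1.IsThreeCycle ∧ a.1 x ≠ x ∧
      (σ a).support.card + 4 ≤ Fintype.card X) :
    ∃ h : Perm X, ∀ (g : alternatingGroup X) (y : X), h (σ g y) = g.1 (h y) := by
  classical
  have hex : ∀ x, ∃ y, ∀ k ∈ Stab x, σ k y = y := fun x => by
    obtain ⟨a, ha, hax, hc⟩ := H x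
    exact exists_stab_fix h8 hσ ha hax hc
  choose f hf using hex
  have hfg : ∀ (g : alternatingGroup X) x, f (g.1 x) = σ g (f x) := by
    intro g x
    refine stab_fix_unique h8 hσ (hf _) fun k hk => ?_
    have h1 : g⁻¹ * k * g ∈ Stab x := by
      rw [mem_stab] at hk ⊢
      simp [hk]
    have h2 := hf x _ h1
    rw [map_mul, map_mul, map_inv, Perm.mul_apply, Perm.mul_apply, Perm.inv_eq_iff_eq] at h2
    exact h2
  have hsimp : IsSimpleGroup (alternatingGroup X) :=
    alternatingGroup.isSimpleGroup (by rw [Nat.card_eq_fintype_card]; omega)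
  have hsurj : Function.Surjective f := by
    by_contra hns
    rw [Function.Surjective] at hns
    push Not at hns
    obtain ⟨z, hz⟩ := hns
    set R : Finset X := Finset.univ.image f with hR
    have hzR : z ∉ R := by simpa [hR] using hz
    have hX : Nonempty X := Fintype.card_pos_iff.1 (by omega)
    have hR1 : R.card < Fintype.card X := Finset.card_lt_univ_of_notMem hzR
    have hR2 : Rᶜ.card < Fintype.card X :=
      Finset.card_lt_univ_of_notMem (x := f hX.some) (by simp [hR])
    have hinv : ∀ k p, p ∈ R → σ k p ∈ R := by
      intro k p hp
      simp only [hR, Finset.mem_image, Finset.mem_univ, true_and] at hp ⊢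
      obtain ⟨q, rfl⟩ := hp
      exact ⟨_, hfg k q⟩
    have hinv' : ∀ k p, p ∈ Rᶜ → σ k p ∈ Rᶜ := by
      intro k p hp
      rw [Finset.mem_compl] at hp ⊢
      intro h
      apply hp
      simpa [← Perm.mul_apply, ← map_mul] using hinv k⁻¹ _ h
    have h1 := two_mul_card_alt (X := X) (by omega)
    obtain ⟨k, hk⟩ := exists_ne (1 : alternatingGroup X)
    apply hk
    apply hσ
    rw [map_one]
    ext p
    by_cases hp : p ∈ R
    · refine fix_of_card σ R hinv ?_ k hp
      have := two_mul_factorial_lt hR1 (by omega)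
      omega
    · refine fix_of_card σ Rᶜ hinv' ?_ k (Finset.mem_compl.2 hp)
      have := two_mul_factorial_lt hR2 (by omega)
      omega
  have hbij : Function.Bijective f := ⟨Finite.injective_iff_surjective.2 hsurj, hsurj⟩
  refine ⟨(Equiv.ofBijective f hbij).symm, fun g y => ?_⟩
  obtain ⟨x, rfl⟩ := hsurj y
  rw [Equiv.symm_apply_eq, Equiv.ofBijective_apply, hfg]
  congr 1
  congr 1
  exact ((Equiv.ofBijective f hbij).symm_apply_apply x).symm ▸ rfl
end aut
end CoHopf

/-! ### The groups and their finite quotients -/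

namespace CoHopf
open Equiv Equiv.Perm

section tc
variable {X : Type*} [DecidableEq X]

lemma tc_commute {a b c a' b' c' : X} (h : ∀ p ∈ [a', b', c'], p ≠ a ∧ p ≠ b ∧ p ≠ c) :
    tc a b c * tc a' b' c' * (tc a b c)⁻¹ * (tc a' b' c')⁻¹ = 1 := by
  simp only [List.mem_cons, List.not_mem_nil, or_false, forall_eq_or_imp, forall_eq] at h
  obtain ⟨⟨h1, h2, h3⟩, ⟨h4, h5, h6⟩, ⟨h7, h8, h9⟩⟩ := h
  rw [tc_conj, tc_apply_of_ne h1 h2 h3, tc_apply_of_ne h4 h5 h6, tc_apply_of_ne h7 h8 h9,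
    mul_inv_cancel]
end tc

variable {X : ℕ → Type}

/-- The ambient group: the product of all symmetric groups of the sets `X n`, times `ℤ × ℤ`
(written multiplicatively). -/
abbrev Amb (X : ℕ → Type) : Type := (∀ n, Perm (X n)) × Multiplicative (ℤ × ℤ)

/-- The projection to the symmetric group of `X n`. -/
def coord (X : ℕ → Type) (n : ℕ) : Amb X →* Perm (X n) :=
  (Pi.evalMonoidHom _ n).comp (MonoidHom.fst _ _)

@[simp] lemma coord_apply (n : ℕ) (g : Amb X) : coord X n g = g.1 n := rfl

/-- The inclusion of the symmetric group of `X n` as a factor. -/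
def single (X : ℕ → Type) (n : ℕ) : Perm (X n) →* Amb X :=
  (MonoidHom.inl _ _).comp (MonoidHom.mulSingle (fun n => Perm (X n)) n)

@[simp] lemma single_same (n : ℕ) (α : Perm (X n)) : (single X n α).1 n = α := by
  simp [single]

lemma single_ne {n m : ℕ} (h : m ≠ n) (α : Perm (X n)) : (single X n α).1 m = 1 := by
  simp [single, h]

@[simp] lemma single_snd (n : ℕ) (α : Perm (X n)) : (single X n α).2 = 1 := rfl

/-- Erasing the coordinates below `n`. -/
def trunc (X : ℕ → Type) (n : ℕ) : Amb X →* Amb X where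
  toFun g := (fun m => if m < n then 1 else g.1 m, g.2)
  map_one' := by ext <;> simp
  map_mul' a b := by
    refine Prod.ext (funext fun m => ?_) rfl
    by_cases h : m < n <;> simp [h]

lemma trunc_lt {n m : ℕ} (h : m < n) (g : Amb X) : (trunc X n g).1 m = 1 := by simp [trunc, h]
lemma trunc_ge {n m : ℕ} (h : n ≤ m) (g : Amb X) : (trunc X n g).1 m = g.1 m := by
  simp [trunc, not_lt.2 h]
@[simp] lemma trunc_snd (n : ℕ) (g : Amb X) : (trunc X n g).2 = g.2 := rfl

/-- An element with finitely many nontrivial coordinates is the product of its coordinates. -/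
lemma mem_of_singles (S : Subgroup (Amb X)) (n : ℕ) (g : Amb X)
    (h1 : ∀ m < n, single X m (g.1 m) ∈ S) (h2 : ∀ m, n ≤ m → g.1 m = 1) (h3 : g.2 = 1) :
    g ∈ S := by
  induction n generalizing g with
  | zero =>
    have : g = 1 := Prod.ext (funext fun m => h2 m (Nat.zero_le _)) h3
    exact this ▸ S.one_mem
  | succ n ih =>
    have hg : g = (g * (single X n (g.1 n))⁻¹) * single X n (g.1 n) := by group
    rw [hg]
    refine S.mul_mem (ih _ ?_ ?_ ?_) (h1 n (Nat.lt_succ_self n))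
    · intro m hm
      have : (g * (single X n (g.1 n))⁻¹).1 m = g.1 m := by
        rw [Prod.fst_mul, Pi.mul_apply, Prod.fst_inv, Pi.inv_apply, single_ne hm.ne, inv_one,
          mul_one]
      rw [this]
      exact h1 m (by omega)
    · intro m hm
      rw [Prod.fst_mul, Pi.mul_apply, Prod.fst_inv, Pi.inv_apply]
      obtain rfl | hmn := eq_or_ne m n
      · rw [single_same, mul_inv_cancel]
      · rw [single_ne hmn, h2 m (by omega), inv_one, mul_one]
    · rw [Prod.snd_mul, Prod.snd_inv, h3, single_snd]; simp

variable [∀ n, Fintype (X n)] [∀ n, DecidableEq (X n)]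

/-- The input of the construction: on each finite set `X n` two commuting even permutations `t n`
and `u n`, five marked points, and a period `per n` of `t n` growing with `n`, such that `t n ^ k`,
for `k` between `3` and `per n - 3`, moves no marked point to a marked point (`far`), and such that
`t n`, `u n` together with the three-cycles on marked points generating the alternating group. -/
structure Datum (X : ℕ → Type) [∀ n, Fintype (X n)] [∀ n, DecidableEq (X n)] where
  t : ∀ n, Perm (X n)
  u : ∀ n, Perm (X n)
  x : ∀ n, Fin 5 → X n
  per : ℕ → ℕ
  comm : ∀ n, t n * u n = u n * t n
  sign_t : ∀ n, sign (t n) = 1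
  sign_u : ∀ n, sign (u n) = 1
  x_inj : ∀ n, Function.Injective (x n)
  three_le : ∀ n, 3 ≤ per n
  per_lt : ∀ {n m}, n < m → per n + 2 < per m
  t_per : ∀ n, t n ^ per n = 1
  far : ∀ m k i j, 3 ≤ k → k + 2 < per m → (t m ^ k) (x m i) ≠ x m j
  gen : ∀ n (S : Subgroup (Perm (X n))), t n ∈ S → u n ∈ S →
    (∀ i j k, i ≠ j → j ≠ k → i ≠ k → tc (x n i) (x n j) (x n k) ∈ S) →
    alternatingGroup (X n) ≤ S
  card_ge : ∀ n, n + 8 ≤ Fintype.card (X n)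

namespace Datum
variable (D : Datum X)

/-- The generator `T`. -/
def T : Amb X := (D.t, Multiplicative.ofAdd (1, 0))
/-- The generator `U`. -/
def U : Amb X := (D.u, Multiplicative.ofAdd (0, 1))
/-- The diagonal three-cycle on the marked points `i`, `j`, `k`. -/
def A (i j k : Fin 5) : Amb X := (fun n => tc (D.x n i) (D.x n j) (D.x n k), 1)

@[simp] lemma T_fst (n : ℕ) : D.T.1 n = D.t n := rfl
@[simp] lemma U_fst (n : ℕ) : D.U.1 n = D.u n := rfl
@[simp] lemma A_fst (i j k : Fin 5) (n : ℕ) :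
    (D.A i j k).1 n = tc (D.x n i) (D.x n j) (D.x n k) := rfl
@[simp] lemma A_snd (i j k : Fin 5) : (D.A i j k).2 = 1 := rfl

/-- The generating set. -/
def gens : Set (Amb X) :=
  {g | g = D.T ∨ g = D.U ∨ ∃ i j k, i ≠ j ∧ j ≠ k ∧ i ≠ k ∧ g = D.A i j k}

/-- The group attached to a datum: the subgroup of the ambient group generated by the diagonal
elements `T`, `U` and the diagonal three-cycles on marked points. -/
def Γ : Subgroup (Amb X) := Subgroup.closure D.gens

lemma T_mem : D.T ∈ D.Γ := Subgroup.subset_closure (.inl rfl)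
lemma U_mem : D.U ∈ D.Γ := Subgroup.subset_closure (.inr (.inl rfl))
lemma A_mem {i j k : Fin 5} (hij : i ≠ j) (hjk : j ≠ k) (hik : i ≠ k) : D.A i j k ∈ D.Γ :=
  Subgroup.subset_closure (.inr (.inr ⟨i, j, k, hij, hjk, hik, rfl⟩))

lemma T_comm_U : D.T * D.U = D.U * D.T :=
  Prod.ext (funext fun n => D.comm n) (mul_comm _ _)

lemma gens_finite : D.gens.Finite := by
  have : D.gens ⊆ {D.T, D.U} ∪ Set.range (fun p : Fin 5 × Fin 5 × Fin 5 => D.A p.1 p.2.1 p.2.2) := by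
    rintro g (rfl | rfl | ⟨i, j, k, -, -, -, rfl⟩)
    · simp
    · simp
    · exact .inr ⟨(i, j, k), rfl⟩
  exact ((Set.toFinite {D.T, D.U}).union (Set.finite_range _)).subset this

lemma fg : Group.FG D.Γ :=
  (Group.fg_iff_subgroup_fg _).2 ((Subgroup.fg_iff _).2 ⟨D.gens, rfl, D.gens_finite⟩)

lemma even {g : Amb X} (hg : g ∈ D.Γ) (n : ℕ) : sign (g.1 n) = 1 := by
  have : D.Γ ≤ (sign.comp (coord X n)).ker := by
    rw [Γ, Subgroup.closure_le]
    rintro g (rfl | rfl | ⟨i, j, k, hij, hjk, hik, rfl⟩)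
    · simp [MonoidHom.mem_ker, D.sign_t]
    · simp [MonoidHom.mem_ker, D.sign_u]
    · simp only [SetLike.mem_coe, MonoidHom.mem_ker, MonoidHom.comp_apply, coord_apply, A_fst]
      exact sign_tc ((D.x_inj n).ne hij) ((D.x_inj n).ne hjk)
  exact this hg

lemma alt_le_map (n : ℕ) : alternatingGroup (X n) ≤ D.Γ.map (coord X n) :=
  D.gen n _ ⟨_, D.T_mem, rfl⟩ ⟨_, D.U_mem, rfl⟩
    fun _ _ _ hij hjk hik => ⟨_, D.A_mem hij hjk hik, rfl⟩

/-- The commutator of two diagonal three-cycles whose second factor is moved far away by a power of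
`T` is trivial in all coordinates where that power is well below the period. -/
lemma comm_far {i j k i' j' k' : Fin 5} {p m : ℕ} (hp : 3 ≤ p) (hm : p + 2 < D.per m) :
    (D.A i j k * (D.T ^ p * D.A i' j' k' * (D.T ^ p)⁻¹) * (D.A i j k)⁻¹ *
      (D.T ^ p * D.A i' j' k' * (D.T ^ p)⁻¹)⁻¹).1 m = 1 := by
  simp only [Prod.fst_mul, Pi.mul_apply, Prod.fst_inv, Pi.inv_apply, Prod.pow_fst, Pi.pow_apply,
    T_fst, A_fst]
  rw [tc_conj (D.t m ^ p)]
  apply tc_commute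
  simp only [List.mem_cons, List.not_mem_nil, or_false]
  rintro q (rfl | rfl | rfl) <;> exact ⟨D.far _ _ _ _ hp hm, D.far _ _ _ _ hp hm, D.far _ _ _ _ hp hm⟩

/-- Truncation at `n` preserves the group as soon as the group contains the factors below `n`. -/
lemma trunc_mem_of {n : ℕ} (h : ∀ k < n, ∀ α : Perm (X k), sign α = 1 → single X k α ∈ D.Γ)
    {g : Amb X} (hg : g ∈ D.Γ) : trunc X n g ∈ D.Γ := by
  have h1 : g * (trunc X n g)⁻¹ ∈ D.Γ := by
    refine mem_of_singles _ n _ ?_ ?_ ?_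
    · intro m hm
      apply h m hm
      rw [Prod.fst_mul, Pi.mul_apply, Prod.fst_inv, Pi.inv_apply, trunc_lt hm, inv_one, mul_one]
      exact D.even hg m
    · intro m hm
      rw [Prod.fst_mul, Pi.mul_apply, Prod.fst_inv, Pi.inv_apply, trunc_ge hm, mul_inv_cancel]
    · rw [Prod.snd_mul, Prod.snd_inv, trunc_snd, mul_inv_cancel]
  have h2 := D.Γ.mul_mem (D.Γ.inv_mem h1) hg
  simpa using h2

lemma simple (D : Datum X) (n : ℕ) : IsSimpleGroup (alternatingGroup (X n)) :=
  alternatingGroup.isSimpleGroup (by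
    rw [Nat.card_eq_fintype_card]; have := D.card_ge n; omega)

/-- The group contains every alternating factor.  By induction, the coordinates below `n` can be
erased.  The commutator of a diagonal three-cycle with a second one, conjugated by the period of `T`
in coordinate `n`, is a three-cycle in coordinate `n` and trivial beyond, since the periods grow;
the group acts on the factor through the whole alternating group, which is simple. -/
lemma single_mem (n : ℕ) : ∀ {α : Perm (X n)}, sign α = 1 → single X n α ∈ D.Γ := by
  induction n using Nat.strong_induction_on with
  | _ n ih =>
  have hT : ∀ p, D.T ^ p ∈ D.Γ := fun p => D.Γ.pow_mem D.T_mem p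
  have h013 := D.A_mem (i := 0) (j := 1) (k := 3) (by decide) (by decide) (by decide)
  have h024 := D.A_mem (i := 0) (j := 2) (k := 4) (by decide) (by decide) (by decide)
  have h024' := D.Γ.mul_mem (D.Γ.mul_mem (hT (D.per n)) h024) (D.Γ.inv_mem (hT (D.per n)))
  have hc := D.Γ.mul_mem (D.Γ.mul_mem (D.Γ.mul_mem h013 h024') (D.Γ.inv_mem h013))
    (D.Γ.inv_mem h024')
  have hc' := D.trunc_mem_of (n := n) (fun k hk α hα => ih k hk hα) hc
  have hsingle : single X n (tc (D.x n 0) (D.x n 1) (D.x n 2)) ∈ D.Γ := by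
    convert hc' using 1
    refine Prod.ext (funext fun m => ?_) ?_
    · obtain h | rfl | h := lt_trichotomy m n
      · rw [trunc_lt h, single_ne h.ne]
      · rw [trunc_ge le_rfl, single_same]
        simp only [Prod.fst_mul, Pi.mul_apply, Prod.fst_inv, Pi.inv_apply, Prod.pow_fst,
          Pi.pow_apply, T_fst, A_fst, D.t_per, inv_one, one_mul, mul_one]
        have hne : ∀ {i j : Fin 5}, i ≠ j → D.x m i ≠ D.x m j := fun h => (D.x_inj m).ne h
        rw [tc_commutator] <;> apply hne <;> decide
      · rw [trunc_ge h.le, single_ne h.ne', D.comm_far (D.three_le n) (D.per_lt h)]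
    · simp
  have hsimp := D.simple n
  have hnorm : ((D.Γ.comap (single X n)).subgroupOf (alternatingGroup (X n))).Normal := by
    constructor
    intro α hα β
    rw [Subgroup.mem_subgroupOf, Subgroup.mem_comap] at hα ⊢
    obtain ⟨g, hg, hgβ⟩ := D.alt_le_map n β.2
    rw [coord_apply] at hgβ
    have : single X n ((β * α * β⁻¹ : alternatingGroup (X n)) : Perm (X n)) =
        g * single X n α * g⁻¹ := by
      refine Prod.ext (funext fun m => ?_) ?_
      · obtain rfl | h := eq_or_ne m n
        · simp [hgβ]
        · simp [single_ne h]
      · simp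
    rw [this]
    exact D.Γ.mul_mem (D.Γ.mul_mem hg hα) (D.Γ.inv_mem hg)
  have htop := hnorm.eq_bot_or_eq_top.resolve_left fun hbot => by
    have h1 : sign (tc (D.x n 0) (D.x n 1) (D.x n 2)) = 1 :=
      sign_tc ((D.x_inj n).ne (by decide)) ((D.x_inj n).ne (by decide))
    have h2 : (⟨_, h1⟩ : alternatingGroup (X n)) ∈
      (D.Γ.comap (single X n)).subgroupOf (alternatingGroup (X n)) := hsingle
    rw [hbot, Subgroup.mem_bot, Subtype.ext_iff] at h2
    exact tc_ne_one ((D.x_inj n).ne (by decide)) ((D.x_inj n).ne (by decide)) h2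
  intro α hα
  have : (⟨α, hα⟩ : alternatingGroup (X n)) ∈
    (D.Γ.comap (single X n)).subgroupOf (alternatingGroup (X n)) := by rw [htop]; trivial
  exact this

lemma trunc_mem (n : ℕ) {g : Amb X} (hg : g ∈ D.Γ) : trunc X n g ∈ D.Γ :=
  D.trunc_mem_of (fun _ _ _ hα => D.single_mem _ hα) hg

/-- A subgroup containing all alternating factors contains an even element as soon as it contains
one that agrees with it up to finitely many coordinates. -/
lemma mem_of_eventually {S : Subgroup (Amb X)}
    (hS : ∀ n (α : Perm (X n)), sign α = 1 → single X n α ∈ S) {g g' : Amb X}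
    (hg : ∀ n, sign (g.1 n) = 1) (hg'e : ∀ n, sign (g'.1 n) = 1) (hg' : g' ∈ S) (h2 : g.2 = g'.2)
    {n0 : ℕ} (h : ∀ n, n0 ≤ n → g.1 n = g'.1 n) : g ∈ S := by
  have h1 : g * g'⁻¹ ∈ S := by
    refine mem_of_singles _ n0 _ ?_ ?_ ?_
    · intro m hm
      apply hS
      rw [Prod.fst_mul, Pi.mul_apply, Prod.fst_inv, Pi.inv_apply, map_mul, map_inv, hg, hg'e]
      simp
    · intro m hm
      rw [Prod.fst_mul, Pi.mul_apply, Prod.fst_inv, Pi.inv_apply, h m hm, mul_inv_cancel]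
    · rw [Prod.snd_mul, Prod.snd_inv, h2, mul_inv_cancel]
  simpa using S.mul_mem h1 hg'

/-- The element `T ^ i * U ^ j`. -/
def W (w : ℤ × ℤ) : Amb X := D.T ^ w.1 * D.U ^ w.2

lemma W_add (w w' : ℤ × ℤ) : D.W (w + w') = D.W w * D.W w' := by
  have h : Commute D.T D.U := D.T_comm_U
  simp only [W, Prod.fst_add, Prod.snd_add, zpow_add, mul_assoc]
  congr 1
  rw [← mul_assoc (D.U ^ w.2), ← (h.zpow_zpow w'.1 w.2).eq, mul_assoc]

@[simp] lemma W_zero : D.W 0 = 1 := by simp [W]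

lemma W_neg (w : ℤ × ℤ) : D.W (-w) = (D.W w)⁻¹ := by
  rw [eq_inv_iff_mul_eq_one, ← W_add, neg_add_cancel, W_zero]

lemma W_mem (w : ℤ × ℤ) : D.W w ∈ D.Γ :=
  D.Γ.mul_mem (D.Γ.zpow_mem D.T_mem _) (D.Γ.zpow_mem D.U_mem _)

lemma W_snd (w : ℤ × ℤ) : (D.W w).2 = Multiplicative.ofAdd w := by
  change (Multiplicative.ofAdd ((1, 0) : ℤ × ℤ)) ^ w.1 * (Multiplicative.ofAdd (0, 1)) ^ w.2 = _
  rw [← ofAdd_zsmul, ← ofAdd_zsmul, ← ofAdd_add]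
  congr 1
  ext <;> simp

lemma W_fst (w : ℤ × ℤ) (n : ℕ) : (D.W w).1 n = D.t n ^ w.1 * D.u n ^ w.2 := rfl

/-- The translates of the diagonal three-cycles. -/
def conjs : Set (Amb X) :=
  {g | ∃ w i j k, i ≠ j ∧ j ≠ k ∧ i ≠ k ∧ g = D.W w * D.A i j k * (D.W w)⁻¹}

lemma conjs_sub {g : Amb X} (hg : g ∈ D.conjs) : g ∈ D.Γ := by
  obtain ⟨w, i, j, k, hij, hjk, hik, rfl⟩ := hg
  exact D.Γ.mul_mem (D.Γ.mul_mem (D.W_mem w) (D.A_mem hij hjk hik)) (D.Γ.inv_mem (D.W_mem w))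

lemma conjs_snd {g : Amb X} (hg : g ∈ Subgroup.closure D.conjs) : g.2 = 1 := by
  have : Subgroup.closure D.conjs ≤ (MonoidHom.snd (∀ n, Perm (X n)) (Multiplicative (ℤ × ℤ))).ker := by
    rw [Subgroup.closure_le]
    rintro _ ⟨w, i, j, k, hij, hjk, hik, rfl⟩
    rw [SetLike.mem_coe, MonoidHom.mem_ker]
    simp
  exact this hg

/-- Modulo the translates of the diagonal three-cycles only the elements `T ^ i * U ^ j` remain. -/
lemma decomp {g : Amb X} (hg : g ∈ D.Γ) :
    ∃ d ∈ Subgroup.closure D.conjs, ∃ w, g = d * D.W w := by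
  refine Subgroup.closure_induction_right (p := fun g _ => ∃ d ∈ Subgroup.closure D.conjs,
    ∃ w, g = d * D.W w) ⟨1, Subgroup.one_mem _, 0, by simp⟩ ?_ ?_ hg
  · rintro _ - y hy ⟨d, hd, w, rfl⟩
    obtain rfl | rfl | ⟨i, j, k, hij, hjk, hik, rfl⟩ := hy
    · exact ⟨d, hd, w + (1, 0), by rw [W_add, mul_assoc]; simp [W]⟩
    · exact ⟨d, hd, w + (0, 1), by rw [W_add, mul_assoc]; simp [W]⟩
    · exact ⟨_, Subgroup.mul_mem _ hd (Subgroup.subset_closure ⟨w, i, j, k, hij, hjk, hik, rfl⟩), w,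
        by group⟩
  · rintro _ - y hy ⟨d, hd, w, rfl⟩
    obtain rfl | rfl | ⟨i, j, k, hij, hjk, hik, rfl⟩ := hy
    · exact ⟨d, hd, w + -(1, 0), by rw [W_add, W_neg, mul_assoc]; simp [W]⟩
    · exact ⟨d, hd, w + -(0, 1), by rw [W_add, W_neg, mul_assoc]; simp [W]⟩
    · exact ⟨_, Subgroup.mul_mem _ hd (Subgroup.inv_mem _
        (Subgroup.subset_closure ⟨w, i, j, k, hij, hjk, hik, rfl⟩)), w, by group⟩

lemma decomp_one {g : Amb X} (hg : g ∈ D.Γ) (h : g.2 = 1) : g ∈ Subgroup.closure D.conjs := by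
  obtain ⟨d, hd, w, rfl⟩ := D.decomp hg
  rw [Prod.snd_mul, D.conjs_snd hd, one_mul, W_snd] at h
  have : w = 0 := h
  rw [this, W_zero, mul_one]
  exact hd

lemma le_per (n : ℕ) : n ≤ D.per n := by
  induction n with
  | zero => exact Nat.zero_le _
  | succ n ih => have := D.per_lt (show n < n + 1 by omega); omega

/-- Truncation as an endomorphism of the group. -/
def truncΓ (n : ℕ) : D.Γ →* D.Γ :=
  ((trunc X n).comp D.Γ.subtype).codRestrict D.Γ fun g => D.trunc_mem n g.2

/-- A homomorphism to a finite group that kills the alternating factors from `n0` on kills all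
elements with trivial `ℤ × ℤ`-part and trivial coordinates below `n0`.  A diagonal three-cycle is a
commutator of two others; conjugating the second one by a power of `T` whose exponent is a multiple
of the order of the finite group does not change the image, but makes the commutator trivial in
almost all coordinates. -/
lemma kills {F : Type*} [Group F] [Finite F] (ρ : D.Γ →* F) (n0 : ℕ)
    (hρ : ∀ n, n0 ≤ n → ∀ (α : Perm (X n)) (hα : sign α = 1), ρ ⟨_, D.single_mem n hα⟩ = 1)
    (g : D.Γ) (h2 : g.1.2 = 1) (h1 : ∀ n < n0, g.1.1 n = 1) : ρ g = 1 := by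
  set ρ' := ρ.comp (D.truncΓ n0) with hρ'
  have hfin : ∀ (c : D.Γ) (m : ℕ), c.1.2 = 1 → (∀ n, m ≤ n → c.1.1 n = 1) → ρ' c = 1 := by
    intro c m hc2 hc1
    have : (D.truncΓ n0 c).1 ∈ ρ.ker.map D.Γ.subtype := by
      refine mem_of_singles _ m _ ?_ ?_ ?_
      · intro k hk
        by_cases hkn : k < n0
        · have : (D.truncΓ n0 c).1.1 k = 1 := trunc_lt hkn _
          rw [this, map_one]
          exact Subgroup.one_mem _
        · have he : sign ((D.truncΓ n0 c).1.1 k) = 1 := D.even (D.truncΓ n0 c).2 k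
          exact ⟨⟨_, D.single_mem k he⟩, hρ k (not_lt.1 hkn) _ he, rfl⟩
      · intro k hk
        by_cases hkn : k < n0
        · exact trunc_lt hkn _
        · exact (trunc_ge (not_lt.1 hkn) _).trans (hc1 k hk)
      · exact hc2
    obtain ⟨y, hy, hyc⟩ := this
    have : y = D.truncΓ n0 c := Subtype.ext hyc
    rw [hρ', MonoidHom.comp_apply, ← this]
    exact hy
  have hA : ∀ (i j k : Fin 5) (hij : i ≠ j) (hjk : j ≠ k) (hik : i ≠ k),
      ρ' ⟨_, D.A_mem hij hjk hik⟩ = 1 := by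
    intro i j k hij hjk hik
    obtain ⟨d, e, hd1, hd2, hd3, he1, he2, he3, hde⟩ : ∃ d e : Fin 5, i ≠ d ∧ j ≠ d ∧ k ≠ d ∧
        i ≠ e ∧ j ≠ e ∧ k ≠ e ∧ d ≠ e := by
      revert i j k; decide
    set a : D.Γ := ⟨_, D.A_mem hij hd2 hd1⟩
    set b : D.Γ := ⟨_, D.A_mem hik he3 he1⟩
    set T : D.Γ := ⟨_, D.T_mem⟩
    set p := 3 * Nat.card F
    have hab : (⟨_, D.A_mem hij hjk hik⟩ : D.Γ) = a * b * a⁻¹ * b⁻¹ := by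
      refine Subtype.ext (Prod.ext (funext fun n => ?_) ?_)
      · have hne : ∀ {i j : Fin 5}, i ≠ j → D.x n i ≠ D.x n j := fun h => (D.x_inj n).ne h
        exact (tc_commutator (hne hij) (hne hik) (hne hd1) (hne he1) (hne hjk) (hne he2)
          (hne hd3) (hne he3) (hne hde)).symm
      · simp [a, b]
    have hT : ρ' T ^ p = 1 := by
      rw [pow_mul', pow_card_eq_one', one_pow]
    have hb : ρ' b = ρ' (T ^ p * b * (T ^ p)⁻¹) := by
      rw [map_mul, map_mul, map_inv, map_pow, hT, inv_one, one_mul, mul_one]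
    rw [hab]
    have : ρ' (a * b * a⁻¹ * b⁻¹) =
        ρ' (a * (T ^ p * b * (T ^ p)⁻¹) * a⁻¹ * (T ^ p * b * (T ^ p)⁻¹)⁻¹) := by
      simp only [map_mul ρ' _ b⁻¹, map_mul ρ' _ a⁻¹, map_mul ρ' a, map_inv ρ' b, hb,
        map_mul ρ' _ (T ^ p * b * (T ^ p)⁻¹)⁻¹, map_inv]
    rw [this]
    refine hfin _ (p + 3) ?_ ?_
    · simp [a, b]
    · intro n hn
      have : 0 < Nat.card F := Nat.card_pos
      have := D.le_per n
      exact D.comm_far (by omega) (by omega)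
  have hker : Subgroup.closure D.conjs ≤ ρ'.ker.map D.Γ.subtype := by
    rw [Subgroup.closure_le]
    rintro _ ⟨w, i, j, k, hij, hjk, hik, rfl⟩
    refine ⟨⟨_, D.W_mem w⟩ * ⟨_, D.A_mem hij hjk hik⟩ * (⟨_, D.W_mem w⟩)⁻¹, ?_, rfl⟩
    rw [SetLike.mem_coe, MonoidHom.mem_ker, map_mul, map_mul, map_inv, hA i j k hij hjk hik, mul_one,
      mul_inv_cancel]
  obtain ⟨y, hy, hyg⟩ := hker (D.decomp_one g.2 h2)
  have hyg' : y = g := Subtype.ext hyg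
  have htr : D.truncΓ n0 g = g := by
    refine Subtype.ext (Prod.ext (funext fun n => ?_) rfl)
    by_cases hn : n < n0
    · exact (trunc_lt hn _).trans (h1 n hn).symm
    · exact trunc_ge (not_lt.1 hn) _
  rw [← htr]
  exact hyg' ▸ hy

/-- Restriction to the coordinates below `n0`, together with the `ℤ × ℤ`-part. -/
def restr (n0 : ℕ) : D.Γ →* (∀ n : Fin n0, alternatingGroup (X n)) × Multiplicative (ℤ × ℤ) where
  toFun g := (fun n => ⟨g.1.1 n, D.even g.2 n⟩, g.1.2)
  map_one' := rfl
  map_mul' _ _ := rfl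

lemma restr_surjective (n0 : ℕ) : Function.Surjective (D.restr n0) := by
  rintro ⟨a, w⟩
  set g : Amb X := (fun n => if h : n < n0 then (a ⟨n, h⟩ : Perm (X n)) else
    (D.W (Multiplicative.toAdd w)).1 n, w) with hg
  have hmem : g ∈ D.Γ := by
    refine mem_of_eventually (fun n α hα => D.single_mem n hα) (g' := D.W (Multiplicative.toAdd w))
      (n0 := n0) ?_ (D.even (D.W_mem _)) (D.W_mem _) ?_ ?_
    · intro n
      by_cases h : n < n0
      · simp only [hg, h, dite_true]
        exact (a ⟨n, h⟩).2
      · simp only [hg, h, dite_false]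
        exact D.even (D.W_mem _) n
    · rw [W_snd]; rfl
    · intro n hn
      simp [hg, not_lt.2 hn]
  refine ⟨⟨g, hmem⟩, Prod.ext (funext fun n => Subtype.ext ?_) rfl⟩
  simp [restr, hg]

lemma lt_card_alt (D : Datum X) (n : ℕ) : n < Nat.card (alternatingGroup (X n)) := by
  have h1 := D.card_ge n
  have h2 := two_mul_card_alt (X := X n) (by omega)
  have h3 := two_mul_factorial_lt (a := n) (b := Fintype.card (X n)) (by omega) (by omega)
  have h4 := Nat.self_le_factorial n
  omega

/-- The alternating factor at `n`. -/
def ι (n : ℕ) : alternatingGroup (X n) →* D.Γ :=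
  ((single X n).comp (alternatingGroup (X n)).subtype).codRestrict D.Γ
    fun α => D.single_mem n α.2

lemma ι_trivial_or (n : ℕ) {F : Type*} [Group F] (ρ : D.Γ →* F) :
    (∀ α, ρ (D.ι n α) = 1) ∨ Function.Injective (ρ.comp (D.ι n)) := by
  have := D.simple n
  obtain h | h := ((ρ.comp (D.ι n)).normal_ker).eq_bot_or_eq_top
  · exact .inr ((MonoidHom.ker_eq_bot_iff _).1 h)
  · exact .inl fun α => by
      have : α ∈ (ρ.comp (D.ι n)).ker := by rw [h]; trivial
      exact this

/-- A finite group is a quotient of the group of a datum if and only if it is a quotient of the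
product of finitely many of the alternating factors with `ℤ × ℤ`. -/
lemma finite_quotient_iff (F : Type) [Group F] [Finite F] :
    (∃ f : D.Γ →* F, Function.Surjective f) ↔ ∃ n0 : ℕ,
      ∃ f : (∀ n : Fin n0, alternatingGroup (X n)) × Multiplicative (ℤ × ℤ) →* F,
        Function.Surjective f := by
  constructor
  · rintro ⟨f, hf⟩
    refine ⟨Nat.card F, ?_⟩
    have hker : (D.restr (Nat.card F)).ker ≤ f.ker := by
      intro g hg
      rw [MonoidHom.mem_ker] at hg ⊢
      refine D.kills f (Nat.card F) ?_ g (congrArg Prod.snd hg) ?_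
      · intro n hn α hα
        refine (D.ι_trivial_or n f).elim (fun h => h ⟨α, hα⟩) fun h => ?_
        have h1 := Nat.card_le_card_of_injective _ h
        have h2 := D.lt_card_alt n
        omega
      · intro n hn
        exact congrArg Subtype.val (congrFun (congrArg Prod.fst hg) ⟨n, hn⟩)
    refine ⟨(D.restr _).liftOfSurjective (D.restr_surjective _) ⟨f, hker⟩, fun y => ?_⟩
    obtain ⟨g, rfl⟩ := hf y
    exact ⟨D.restr _ g, MonoidHom.liftOfRightInverse_comp_apply _ _ _ ⟨f, hker⟩ g⟩
  · rintro ⟨n0, f, hf⟩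
    exact ⟨f.comp (D.restr n0), hf.comp (D.restr_surjective n0)⟩

end Datum
end CoHopf

/-! ### The two families of tori -/

namespace CoHopf
open Equiv Equiv.Perm

/-- Connectivity along two commuting permutations acting transitively links all points. -/
lemma linked_of_grid {Z : Type*} [DecidableEq Z] {S : Subgroup (Perm Z)} {T U : Perm Z} {o : Z}
    (hT : T ∈ S) (hU : U ∈ S) (hTU : Commute T U)
    (h1 : Linked S o (T o)) (h2 : Linked S o (U o))
    (htr : ∀ z, ∃ i j : ℤ, z = (T ^ i * U ^ j) o) (x y : Z) : Linked S x y := by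
  have hTz : ∀ z, Linked S z (T z) := by
    intro z
    obtain ⟨i, j, rfl⟩ := htr z
    have := h1.map (S.mul_mem (S.zpow_mem hT i) (S.zpow_mem hU j))
    have hc : Commute T (T ^ i * U ^ j) :=
      ((Commute.refl T).zpow_right i).mul_right (hTU.zpow_right j)
    rwa [← Perm.mul_apply (T ^ i * U ^ j) T, ← hc.eq, Perm.mul_apply] at this
  have hUz : ∀ z, Linked S z (U z) := by
    intro z
    obtain ⟨i, j, rfl⟩ := htr z
    have := h2.map (S.mul_mem (S.zpow_mem hT i) (S.zpow_mem hU j))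
    have hc : Commute U (T ^ i * U ^ j) :=
      (hTU.symm.zpow_right i).mul_right ((Commute.refl U).zpow_right j)
    rwa [← Perm.mul_apply (T ^ i * U ^ j) U, ← hc.eq, Perm.mul_apply] at this
  have hpow : ∀ V : Perm Z, (∀ z, Linked S z (V z)) → ∀ (i : ℤ) z, Linked S z ((V ^ i) z) := by
    intro V hV i
    induction i with
    | zero => intro z; exact .inl rfl
    | succ i ih =>
      intro z
      rw [add_comm, zpow_add, zpow_one, Perm.mul_apply]
      exact (ih z).trans (hV _)
    | pred i ih =>
      intro z
      have h3 := hV ((V ^ (-(i : ℤ) - 1)) z)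
      rw [← Perm.mul_apply, ← zpow_one_add] at h3
      have h4 : (1 : ℤ) + (-(i : ℤ) - 1) = -i := by ring
      rw [h4] at h3
      exact (ih z).trans h3.symm
  have ho : ∀ z, Linked S o z := by
    intro z
    obtain ⟨i, j, rfl⟩ := htr z
    rw [Perm.mul_apply]
    exact (hpow U hUz j o).trans (hpow T hTz i _)
  exact (ho x).symm.trans (ho y)

lemma addRight_zpow_apply {A : Type*} [AddCommGroup A] (a y : A) (k : ℤ) :
    (Equiv.addRight a ^ k : Perm A) y = y + k • a := by
  induction k generalizing y with
  | zero => simp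
  | succ i ih => rw [zpow_add_one, Perm.mul_apply, ih, Equiv.coe_addRight, add_zsmul, one_zsmul,
      add_assoc, add_comm a]
  | pred i ih =>
    rw [zpow_sub_one, Perm.mul_apply, ih, sub_zsmul, Perm.inv_def, Equiv.addRight_symm,
      Equiv.coe_addRight, one_zsmul, add_assoc, add_comm (-a)]

lemma addRight_pow_apply {A : Type*} [AddCommGroup A] (a y : A) (k : ℕ) :
    (Equiv.addRight a ^ k : Perm A) y = y + k • a := by
  exact_mod_cast addRight_zpow_apply a y k

/-- First coordinates of the marked points. -/
def ptA : Fin 5 → ℕ := ![0, 1, 0, 1, 2]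
/-- Second coordinates of the marked points. -/
def ptB : Fin 5 → ℕ := ![0, 0, 1, 1, 0]

lemma ptA_lt (i : Fin 5) : ptA i < 3 := by revert i; decide
lemma ptB_lt (i : Fin 5) : ptB i < 2 := by revert i; decide

lemma natCast_zmod_inj {p a b : ℕ} (ha : a < p) (hb : b < p) (h : (a : ZMod p) = b) : a = b := by
  rw [ZMod.natCast_eq_natCast_iff'] at h
  rwa [Nat.mod_eq_of_lt ha, Nat.mod_eq_of_lt hb] at h

/-- The numerical conditions on the side lengths of the discrete tori. -/
structure Sides (p q : ℕ → ℕ) : Prop where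
  even_p : ∀ n, Even (p n)
  even_q : ∀ n, Even (q n)
  three_le : ∀ n, 3 ≤ p n
  two_le : ∀ n, 2 ≤ q n
  lt : ∀ {n m}, n < m → p n + 2 < p m
  card : ∀ n, n + 8 ≤ p n * q n

/-- The discrete tori `ℤ/p n × ℤ/q n`, with unit translations and five points near the origin. -/
def torus (p q : ℕ → ℕ) [∀ n, NeZero (p n)] [∀ n, NeZero (q n)] (h : Sides p q) :
    Datum (fun n => ZMod (p n) × ZMod (q n)) where
  t n := Equiv.addRight (1, 0)
  u n := Equiv.addRight (0, 1)
  x n i := (ptA i, ptB i)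
  per := p
  comm n := by ext z <;> simp
  sign_t n := by
    have : (Equiv.addRight ((1, 0) : ZMod (p n) × ZMod (q n))) =
        prodCongrLeft (fun _ : ZMod (q n) => Equiv.addRight (1 : ZMod (p n))) := by
      ext z <;> simp [prodCongrLeft]
    rw [this, sign_prodCongrLeft, Finset.prod_const, Finset.card_univ, ZMod.card]
    obtain ⟨k, hk⟩ := h.even_q n
    rw [hk, pow_add, ← mul_pow, Int.units_mul_self, one_pow]
  sign_u n := by
    have : (Equiv.addRight ((0, 1) : ZMod (p n) × ZMod (q n))) =
        prodCongrRight (fun _ : ZMod (p n) => Equiv.addRight (1 : ZMod (q n))) := by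
      ext z <;> simp [prodCongrRight]
    rw [this, sign_prodCongrRight, Finset.prod_const, Finset.card_univ, ZMod.card]
    obtain ⟨k, hk⟩ := h.even_p n
    rw [hk, pow_add, ← mul_pow, Int.units_mul_self, one_pow]
  x_inj n i j hij := by
    have hp := h.three_le n
    have hq := h.two_le n
    have h1 : ptA i = ptA j := natCast_zmod_inj
      (lt_of_lt_of_le (ptA_lt i) hp)
      (lt_of_lt_of_le (ptA_lt j) hp) (congrArg Prod.fst hij)
    have h2 : ptB i = ptB j := natCast_zmod_inj
      (lt_of_lt_of_le (ptB_lt i) hq)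
      (lt_of_lt_of_le (ptB_lt j) hq) (congrArg Prod.snd hij)
    clear hij
    revert i j; decide
  three_le := h.three_le
  per_lt := h.lt
  t_per n := by
    ext z <;> rw [addRight_pow_apply] <;> simp
  far m k i j hk hkm := by
    rw [addRight_pow_apply]
    intro heq
    have h1 := ptA_lt i
    have h2 := ptA_lt j
    have h3 : ((ptA i + k : ℕ) : ZMod (p m)) = (ptA j : ℕ) := by
      simpa using congrArg Prod.fst heq
    have := natCast_zmod_inj (by omega) (by omega) h3
    omega
  gen n S ht hu hA := by
    apply alternatingGroup_le_of_linked
    have hp := h.three_le n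
    have hq := h.two_le n
    have hne1 : (1 : ZMod (p n)) ≠ 0 := by
      intro h; have := natCast_zmod_inj (p := p n) (a := 1) (b := 0) (by omega) (by omega) (by simpa)
      omega
    have hne2 : (1 : ZMod (q n)) ≠ 0 := by
      intro h; have := natCast_zmod_inj (p := q n) (a := 1) (b := 0) (by omega) (by omega) (by simpa)
      omega
    refine linked_of_grid (o := (0, 0)) ht hu ?_ ?_ ?_ ?_
    · ext z <;> simp
    · refine .inr ⟨(0, 1), ?_, ?_, ?_, ?_⟩
      · simp [hne1.symm]
      · simp [hne1]
      · simp [hne2.symm]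
      · simpa [ptA, ptB] using hA 0 1 2 (by decide) (by decide) (by decide)
    · refine .inr ⟨(1, 0), ?_, ?_, ?_, ?_⟩
      · simp [hne2.symm]
      · simp [hne2]
      · simp [hne1.symm]
      · simpa [ptA, ptB] using hA 0 2 1 (by decide) (by decide) (by decide)
    · rintro ⟨a, b⟩
      refine ⟨a.val, b.val, ?_⟩
      rw [Perm.mul_apply, addRight_zpow_apply, addRight_zpow_apply]
      simp
  card_ge n := by
    rw [Fintype.card_prod, ZMod.card, ZMod.card]
    exact h.card n

namespace Datum
variable {X : ℕ → Type} [∀ n, Fintype (X n)] [∀ n, DecidableEq (X n)] (D : Datum X)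

lemma residuallyFinite (g : D.Γ) (hg : g ≠ 1) :
    ∃ (F : Type) (_ : Group F) (_ : Finite F) (φ : D.Γ →* F), φ g ≠ 1 := by
  by_cases h1 : g.1.1 = 1
  · have h2 : Multiplicative.toAdd g.1.2 ≠ 0 := fun h => hg (Subtype.ext (Prod.ext h1 h))
    set w := Multiplicative.toAdd g.1.2 with hw
    set k := w.1.natAbs + w.2.natAbs + 1 with hk
    have : NeZero k := ⟨by omega⟩
    let c : ℤ × ℤ →+ ZMod k × ZMod k := (Int.castAddHom _).prodMap (Int.castAddHom _)
    refine ⟨Multiplicative (ZMod k × ZMod k), inferInstance, inferInstance,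
      (AddMonoidHom.toMultiplicative c).comp ((MonoidHom.snd _ _).comp D.Γ.subtype), fun h => h2 ?_⟩
    have h3 : c w = 0 := h
    have h4 := congrArg Prod.fst h3
    have h5 := congrArg Prod.snd h3
    simp only [c, AddMonoidHom.prodMap_def, AddMonoidHom.prod_apply, AddMonoidHom.comp_apply,
      AddMonoidHom.coe_fst, AddMonoidHom.coe_snd, Int.coe_castAddHom, Prod.fst_zero, Prod.snd_zero,
      ZMod.intCast_zmod_eq_zero_iff_dvd] at h4 h5
    refine Prod.ext (Int.eq_zero_of_abs_lt_dvd h4 ?_) (Int.eq_zero_of_abs_lt_dvd h5 ?_) <;>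
      rw [Int.abs_eq_natAbs] <;> omega
  · obtain ⟨n, hn⟩ : ∃ n, g.1.1 n ≠ 1 := by
      by_contra! h
      exact h1 (funext h)
    exact ⟨Perm (X n), inferInstance, inferInstance, (coord X n).comp D.Γ.subtype, hn⟩

lemma same_finite_quotients {X' : ℕ → Type} [∀ n, Fintype (X' n)] [∀ n, DecidableEq (X' n)]
    (D' : Datum X') (e : ∀ n, X n ≃ X' n) (F : Type) [Group F] [Finite F] :
    (∃ f : D.Γ →* F, Function.Surjective f) ↔ ∃ f : D'.Γ →* F, Function.Surjective f := by
  rw [finite_quotient_iff, finite_quotient_iff]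
  refine exists_congr fun n0 => ?_
  let E : ((∀ n : Fin n0, alternatingGroup (X n)) × Multiplicative (ℤ × ℤ)) ≃*
      ((∀ n : Fin n0, alternatingGroup (X' n)) × Multiplicative (ℤ × ℤ)) :=
    MulEquiv.prodCongr (MulEquiv.piCongrRight fun n => (e n).altCongrHom) (MulEquiv.refl _)
  exact ⟨fun ⟨f, hf⟩ => ⟨f.comp E.symm.toMonoidHom, hf.comp E.symm.surjective⟩,
    fun ⟨f, hf⟩ => ⟨f.comp E.toMonoidHom, hf.comp E.surjective⟩⟩

/-- If `u` has order two in every coordinate, then tripling the second integer coordinate is an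
injective endomorphism fixing `T` and the diagonal three-cycles and sending `U` to `U ^ 3`. -/
lemma exists_not_surjective (hu : ∀ n, D.u n ^ 2 = 1) :
    ∃ f : D.Γ →* D.Γ, Function.Injective f ∧ ¬ Function.Surjective f := by
  let c : ℤ × ℤ →+ ℤ × ℤ := (AddMonoidHom.id ℤ).prodMap (AddMonoidHom.mulLeft 3)
  let F : Amb X →* Amb X := (MonoidHom.id _).prodMap (AddMonoidHom.toMultiplicative c)
  have hF : ∀ g, F g = (g.1, Multiplicative.ofAdd
    ((Multiplicative.toAdd g.2).1, 3 * (Multiplicative.toAdd g.2).2)) := fun _ => rfl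
  have hle : D.Γ ≤ D.Γ.comap F := by
    rw [Γ, Subgroup.closure_le]
    rintro g (rfl | rfl | ⟨i, j, k, hij, hjk, hik, rfl⟩)
    · exact D.T_mem
    · have : F D.U = D.U ^ 3 := by
        refine Prod.ext (funext fun n => ?_) ?_
        · change D.u n = D.u n ^ 3
          rw [pow_succ, hu, one_mul]
        · rfl
      rw [SetLike.mem_coe, Subgroup.mem_comap, this]
      exact D.Γ.pow_mem D.U_mem 3
    · exact D.A_mem hij hjk hik
  refine ⟨(F.comp D.Γ.subtype).codRestrict D.Γ fun g => hle g.2, ?_, ?_⟩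
  · intro a b hab
    have h1 : F a.1 = F b.1 := congrArg Subtype.val hab
    rw [hF, hF, Prod.ext_iff] at h1
    obtain ⟨h1, h2⟩ := h1
    have h3 := Prod.ext_iff.1 (Multiplicative.ofAdd.injective h2)
    refine Subtype.ext (Prod.ext h1 (Multiplicative.toAdd.injective (Prod.ext h3.1 ?_)))
    have := h3.2
    simp only at this
    omega
  · intro hs
    obtain ⟨g, hg⟩ := hs ⟨D.U, D.U_mem⟩
    have h1 : F g.1 = D.U := congrArg Subtype.val hg
    rw [hF, Prod.ext_iff] at h1
    have h2 := congrArg Prod.snd (Multiplicative.ofAdd.injective h1.2)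
    simp only at h2
    omega

end Datum

/-- The side lengths. -/
def N (n : ℕ) : ℕ := (n + 4).factorial

lemma N_pos (n : ℕ) : 0 < N n := Nat.factorial_pos _

instance (n : ℕ) : NeZero (N n) := ⟨(N_pos n).ne'⟩

lemma N_succ (n : ℕ) : N (n + 1) = (n + 5) * N n := Nat.factorial_succ _

lemma N_le {n m : ℕ} (h : n ≤ m) : N n ≤ N m := Nat.factorial_le (by omega)

lemma N_ge (n : ℕ) : 24 ≤ N n := N_le (n := 0) (Nat.zero_le n)

lemma five_N {n m : ℕ} (h : n < m) : 5 * N n ≤ N m := by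
  refine le_trans ?_ (N_le (Nat.succ_le_of_lt h))
  rw [Nat.succ_eq_add_one, N_succ]
  exact Nat.mul_le_mul_right _ (by omega)

lemma dvd_N {k n : ℕ} (h0 : 0 < k) (h : k ≤ n + 4) : k ∣ N n := Nat.dvd_factorial h0 h

lemma le_N (n : ℕ) : n + 4 ≤ N n := Nat.self_le_factorial _

lemma sides_G : Sides N N where
  even_p n := even_iff_two_dvd.2 (dvd_N (by norm_num) (by omega))
  even_q n := even_iff_two_dvd.2 (dvd_N (by norm_num) (by omega))
  three_le n := by have := N_ge n; omega
  two_le n := by have := N_ge n; omega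
  lt h := by have := five_N h; have := N_ge; rename_i n m; have := N_ge n; omega
  card n := by have := N_ge n; have := le_N n; nlinarith

/-- The length of the long side of the second family of tori. -/
def N' (n : ℕ) : ℕ := N n * N n / 2

lemma two_mul_N' (n : ℕ) : 2 * N' n = N n * N n :=
  Nat.mul_div_cancel' ((dvd_N (by norm_num) (by omega)).mul_right _)

instance (n : ℕ) : NeZero (N' n) := ⟨by have := two_mul_N' n; have := N_pos n; intro h; nlinarith⟩

lemma sides_H : Sides N' (fun _ => 2) where
  even_p n := by
    obtain ⟨k, hk⟩ : 4 ∣ N n := dvd_N (by norm_num) (by omega)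
    refine even_iff_two_dvd.2 ⟨k * N n, ?_⟩
    have := two_mul_N' n
    have h2 : N n * N n = 4 * (k * N n) := by rw [← mul_assoc, ← hk]
    omega
  even_q _ := even_two
  three_le n := by have := N_ge n; have := two_mul_N' n; nlinarith
  two_le _ := le_rfl
  lt h := by
    rename_i n m
    have := five_N h; have := N_ge n; have := two_mul_N' n; have := two_mul_N' m; nlinarith
  card n := by have := N_ge n; have := le_N n; have := two_mul_N' n; nlinarith

/-- The square discrete tori. -/
abbrev XG (n : ℕ) : Type := ZMod (N n) × ZMod (N n)

/-- The datum of the co-Hopfian group. -/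
def DG : Datum XG := torus N N sides_G

/-- The datum of the group that is not co-Hopfian. -/
def DH : Datum (fun n => ZMod (N' n) × ZMod 2) := torus N' (fun _ => 2) sides_H

lemma card_eq (n : ℕ) : Nonempty ((ZMod (N n) × ZMod (N n)) ≃ (ZMod (N' n) × ZMod 2)) := by
  rw [← Fintype.card_eq, Fintype.card_prod, Fintype.card_prod, ZMod.card, ZMod.card, ZMod.card,
    ← two_mul_N', mul_comm]

lemma DH_u (n : ℕ) : DH.u n ^ 2 = 1 := by
  change (Equiv.addRight ((0, 1) : ZMod (N' n) × ZMod 2)) ^ 2 = 1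
  ext z <;> rw [addRight_pow_apply]
  · simp
  · have : (2 : ZMod 2) = 0 := rfl
    simp [this]

end CoHopf

/-! ### Elements acting on square tori as perturbed translations -/

namespace CoHopf
open Equiv Equiv.Perm Filter

/-- The covering of the torus `XG m` by the integer grid. -/
def π (m : ℕ) : ℤ × ℤ →+ XG m := (Int.castAddHom _).prodMap (Int.castAddHom _)

lemma π_apply (m : ℕ) (z : ℤ × ℤ) : π m z = ((z.1 : ZMod (N m)), (z.2 : ZMod (N m))) := rfl

lemma π_surjective (m : ℕ) : Function.Surjective (π m) := by
  rintro ⟨a, b⟩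
  exact ⟨(a.val, b.val), by simp [π_apply]⟩

lemma π_eq_zero {m : ℕ} {z : ℤ × ℤ} : π m z = 0 ↔ (N m : ℤ) ∣ z.1 ∧ (N m : ℤ) ∣ z.2 := by
  rw [π_apply, Prod.ext_iff]
  simp only [Prod.fst_zero, Prod.snd_zero, ZMod.intCast_zmod_eq_zero_iff_dvd]

/-- The `ℤ × ℤ`-part of an element, written additively. -/
def v (g : Amb XG) : ℤ × ℤ := Multiplicative.toAdd g.2

lemma v_mul (g h : Amb XG) : v (g * h) = v g + v h := rfl
lemma v_inv (g : Amb XG) : v g⁻¹ = -v g := rfl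
lemma v_one : v 1 = 0 := rfl
lemma v_eq_zero {g : Amb XG} : v g = 0 ↔ g.2 = 1 := Iff.rfl

/-- The `ℓ¹`-norm on the grid. -/
def nm (z : ℤ × ℤ) : ℕ := z.1.natAbs + z.2.natAbs

/-- The centred square of radius `R` in the grid. -/
noncomputable def box (R : ℕ) : Finset (ℤ × ℤ) :=
  Finset.Icc (-(R : ℤ)) R ×ˢ Finset.Icc (-(R : ℤ)) R

lemma mem_box {R : ℕ} {z : ℤ × ℤ} :
    z ∈ box R ↔ (-(R : ℤ) ≤ z.1 ∧ z.1 ≤ R) ∧ (-(R : ℤ) ≤ z.2 ∧ z.2 ≤ R) := by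
  simp [box]

lemma card_box (R : ℕ) : (box R).card = (2 * R + 1) ^ 2 := by
  rw [box, Finset.card_product, Int.card_Icc, ← sq]
  congr 1
  omega

lemma mem_box_nm (z : ℤ × ℤ) : z ∈ box (nm z) := by
  rw [mem_box, nm]; omega

lemma box_mono {R R' : ℕ} (h : R ≤ R') : box R ⊆ box R' := by
  intro z; rw [mem_box, mem_box]; omega

/-- The centred square of radius `R` in the torus. -/
noncomputable def ball (m R : ℕ) : Finset (XG m) := (box R).image (π m)

lemma card_ball (m R : ℕ) : (ball m R).card ≤ (2 * R + 1) ^ 2 :=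
  Finset.card_image_le.trans (card_box R).le

lemma π_mem_ball {m R : ℕ} {z : ℤ × ℤ} (h : z ∈ box R) : π m z ∈ ball m R :=
  Finset.mem_image_of_mem _ h

lemma ball_mono {m R R' : ℕ} (h : R ≤ R') : ball m R ⊆ ball m R' :=
  Finset.image_subset_image (box_mono h)

lemma ball_add {m R : ℕ} {y : XG m} (hy : y ∈ ball m R) (w : ℤ × ℤ) :
    y + π m w ∈ ball m (R + nm w) := by
  obtain ⟨z, hz, rfl⟩ := Finset.mem_image.1 hy
  rw [← map_add]
  refine π_mem_ball ?_
  rw [mem_box] at hz ⊢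
  simp only [Prod.fst_add, Prod.snd_add, nm]
  omega

lemma ev_inj (z z' : ℤ × ℤ) : ∀ᶠ m in atTop, π m z = π m z' ↔ z = z' := by
  refine eventually_atTop.2 ⟨nm (z - z'), fun m hm => ⟨fun h => ?_, fun h => h ▸ rfl⟩⟩
  have h1 : π m (z - z') = 0 := by rw [map_sub, h, sub_self]
  rw [π_eq_zero] at h1
  have h2 := le_N m
  have h3 := mem_box.1 (mem_box_nm (z - z'))
  have h4 := Int.eq_zero_of_abs_lt_dvd h1.1 (by rw [abs_lt]; omega)
  have h5 := Int.eq_zero_of_abs_lt_dvd h1.2 (by rw [abs_lt]; omega)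
  exact sub_eq_zero.1 (Prod.ext h4 h5)

lemma eq_of_freq {z z' : ℤ × ℤ} (h : ∃ᶠ m in atTop, π m z = π m z') : z = z' := by
  obtain ⟨m, h1, h2⟩ := (h.and_eventually (ev_inj z z')).exists
  exact h2.1 h1

lemma ev_not_ball {R : ℕ} {z : ℤ × ℤ} (hz : z ∉ box R) : ∀ᶠ m in atTop, π m z ∉ ball m R := by
  have : ∀ᶠ m in atTop, ∀ z' ∈ box R, π m z = π m z' ↔ z = z' :=
    (Finset.eventually_all _).2 fun z' _ => ev_inj z z'
  filter_upwards [this] with m hm h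
  obtain ⟨z', hz', h2⟩ := Finset.mem_image.1 h
  exact hz ((hm z' hz').1 h2.symm ▸ hz')

/-- Away from the square of radius `R`, the element acts on every torus as a translation. -/
def Coh1 (g : Amb XG) (R : ℕ) : Prop := ∀ m, ∀ y ∉ ball m R, g.1 m y = y + π m (v g)

/-- The action of the element on the tori converges to the permutation `s` of the grid. -/
def Coh (g : Amb XG) (s : Perm (ℤ × ℤ)) : Prop :=
  ∀ z, ∀ᶠ m in atTop, g.1 m (π m z) = π m (s z)

/-- The marked points in the grid. -/
def pz (i : Fin 5) : ℤ × ℤ := (ptA i, ptB i)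

lemma pz_inj : Function.Injective pz := by decide

lemma pz_box (i : Fin 5) : pz i ∈ box 2 := by
  revert i; decide

lemma DG_x (m : ℕ) (i : Fin 5) : DG.x m i = π m (pz i) := by
  simp [π_apply, pz, DG, torus]

lemma DG_T_apply (m : ℕ) (y : XG m) : DG.T.1 m y = y + π m (1, 0) := by
  simp [π_apply, DG, torus]

lemma DG_U_apply (m : ℕ) (y : XG m) : DG.U.1 m y = y + π m (0, 1) := by
  simp [π_apply, DG, torus]

lemma v_T : v DG.T = (1, 0) := rfl
lemma v_U : v DG.U = (0, 1) := rfl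
lemma v_A (i j k : Fin 5) : v (DG.A i j k) = 0 := rfl
lemma v_W (w : ℤ × ℤ) : v (DG.W w) = w := by rw [v, DG.W_snd]; rfl

/-- Every element of the group is a bounded perturbation of a translation, uniformly in the torus.
-/
lemma exists_coh1 {g : Amb XG} (hg : g ∈ DG.Γ) : ∃ R, Coh1 g R := by
  induction hg using Subgroup.closure_induction with
  | mem g hg =>
    obtain rfl | rfl | ⟨i, j, k, hij, hjk, hik, rfl⟩ := hg
    · exact ⟨0, fun m y _ => by rw [DG_T_apply, v_T]⟩
    · exact ⟨0, fun m y _ => by rw [DG_U_apply, v_U]⟩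
    · refine ⟨2, fun m y hy => ?_⟩
      have h : ∀ i, y ≠ π m (pz i) := fun i h => hy (h ▸ π_mem_ball (pz_box i))
      rw [v_A, map_zero, add_zero, Datum.A_fst, DG_x, DG_x, DG_x, tc_apply_of_ne (h i) (h j) (h k)]
  | one => exact ⟨0, fun m y _ => by rw [v_one, map_zero, add_zero]; rfl⟩
  | mul g h _ _ ihg ihh =>
    obtain ⟨R, hR⟩ := ihg
    obtain ⟨R', hR'⟩ := ihh
    refine ⟨R + R' + nm (-v h), fun m y hy => ?_⟩
    have h1 : y ∉ ball m R' := fun h => hy (ball_mono (by omega) h)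
    have h2 : y + π m (v h) ∉ ball m R := by
      intro h3
      have h4 := ball_add h3 (-v h)
      rw [map_neg, add_neg_cancel_right] at h4
      exact hy (ball_mono (by omega) h4)
    rw [Prod.fst_mul, Pi.mul_apply, Perm.mul_apply, hR' m y h1, hR m _ h2, v_mul, map_add,
      add_assoc, add_comm (π m (v g))]
  | inv g _ ih =>
    obtain ⟨R, hR⟩ := ih
    refine ⟨R + nm (v g), fun m y hy => ?_⟩
    have h2 : y - π m (v g) ∉ ball m R := by
      intro h3
      have h4 := ball_add h3 (v g)
      rw [sub_add_cancel] at h4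
      exact hy h4
    rw [Prod.fst_inv, Pi.inv_apply, Perm.inv_eq_iff_eq, v_inv, map_neg, ← sub_eq_add_neg,
      hR m _ h2, sub_add_cancel]

lemma ev_tc (a b c z : ℤ × ℤ) :
    ∀ᶠ m in atTop, tc (π m a) (π m b) (π m c) (π m z) = π m (tc a b c z) := by
  have hswap : ∀ a b z : ℤ × ℤ,
      ∀ᶠ m in atTop, swap (π m a) (π m b) (π m z) = π m (swap a b z) := by
    intro a b z
    filter_upwards [ev_inj z a, ev_inj z b] with m h1 h2
    rw [swap_apply_def, swap_apply_def]
    simp only [h1, h2]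
    split_ifs <;> rfl
  filter_upwards [hswap b c z, hswap a b (swap b c z)] with m h1 h2
  rw [tc, tc, Perm.mul_apply, Perm.mul_apply, h1, h2]

lemma coh_T : Coh DG.T (Equiv.addRight (1, 0)) := fun z => .of_forall fun m => by
  rw [DG_T_apply, ← map_add]; rfl

lemma coh_U : Coh DG.U (Equiv.addRight (0, 1)) := fun z => .of_forall fun m => by
  rw [DG_U_apply, ← map_add]; rfl

lemma coh_A (i j k : Fin 5) : Coh (DG.A i j k) (tc (pz i) (pz j) (pz k)) := fun z => by
  filter_upwards [ev_tc (pz i) (pz j) (pz k) z] with m hm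
  rw [Datum.A_fst, DG_x, DG_x, DG_x, hm]

lemma coh_one : Coh 1 1 := fun _ => .of_forall fun _ => rfl

lemma Coh.mul {g h : Amb XG} {s t : Perm (ℤ × ℤ)} (hg : Coh g s) (hh : Coh h t) :
    Coh (g * h) (s * t) := fun z => by
  filter_upwards [hh z, hg (t z)] with m h1 h2
  rw [Prod.fst_mul, Pi.mul_apply, Perm.mul_apply, h1, h2, Perm.mul_apply]

lemma Coh.inv {g : Amb XG} {s : Perm (ℤ × ℤ)} (hg : Coh g s) : Coh g⁻¹ s⁻¹ := fun z => by
  filter_upwards [hg (s⁻¹ z)] with m h1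
  rw [Prod.fst_inv, Pi.inv_apply, Perm.inv_eq_iff_eq, h1]; simp

lemma exists_coh {g : Amb XG} (hg : g ∈ DG.Γ) : ∃ s, Coh g s := by
  induction hg using Subgroup.closure_induction with
  | mem g hg =>
    obtain rfl | rfl | ⟨i, j, k, hij, hjk, hik, rfl⟩ := hg
    · exact ⟨_, coh_T⟩
    · exact ⟨_, coh_U⟩
    · exact ⟨_, coh_A i j k⟩
  | one => exact ⟨1, coh_one⟩
  | mul g h _ _ ihg ihh =>
    obtain ⟨s, hs⟩ := ihg
    obtain ⟨t, ht⟩ := ihh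
    exact ⟨_, hs.mul ht⟩
  | inv g _ ih =>
    obtain ⟨s, hs⟩ := ih
    exact ⟨_, hs.inv⟩

lemma coh_out {g : Amb XG} {R : ℕ} {s : Perm (ℤ × ℤ)} (h1 : Coh1 g R) (h2 : Coh g s) {z : ℤ × ℤ}
    (hz : z ∉ box R) : s z = z + v g := by
  have : ∀ᶠ m in atTop, π m (s z) = π m (z + v g) := by
    filter_upwards [h2 z, ev_not_ball hz] with m h3 h4
    rw [← h3, h1 m _ h4, map_add]
  exact eq_of_freq this.frequently

lemma ev_one_of_coh {g : Amb XG} (hg : g ∈ DG.Γ) (hv : v g = 0) (hs : Coh g 1) :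
    ∀ᶠ m in atTop, g.1 m = 1 := by
  obtain ⟨R, hR⟩ := exists_coh1 hg
  have : ∀ᶠ m in atTop, ∀ z ∈ box R, g.1 m (π m z) = π m z :=
    (Finset.eventually_all _).2 fun z _ => hs z
  filter_upwards [this] with m hm
  ext1 y
  by_cases hy : y ∈ ball m R
  · obtain ⟨z, hz, rfl⟩ := Finset.mem_image.1 hy
    rw [hm z hz]; rfl
  · rw [hR m y hy, hv, map_zero, add_zero]; rfl

/-- If an element without `ℤ × ℤ`-part acts trivially on infinitely many tori, it acts trivially on
all but finitely many of them. -/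
lemma ev_one_of_freq {g : Amb XG} (hg : g ∈ DG.Γ) (hv : v g = 0)
    (h : ∃ᶠ m in atTop, g.1 m = 1) : ∀ᶠ m in atTop, g.1 m = 1 := by
  obtain ⟨s, hs⟩ := exists_coh hg
  have hs1 : s = 1 := by
    ext1 z
    refine eq_of_freq ((h.and_eventually (hs z)).mono fun m hm => ?_)
    rw [← hm.2, hm.1]; rfl
  exact ev_one_of_coh hg hv (hs1 ▸ hs)

/-- Every three-cycle of the grid is the limit of an element of the group which is eventually equal
to the corresponding three-cycle. -/
lemma exists_tc {x y z : ℤ × ℤ} (hxy : x ≠ y) (hyz : y ≠ z) (hxz : x ≠ z) :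
    ∃ g ∈ DG.Γ, v g = 0 ∧ ∀ᶠ m in atTop, g.1 m = tc (π m x) (π m y) (π m z) := by
  let S : Subgroup (Perm (ℤ × ℤ)) :=
    { carrier := {s | ∃ g ∈ DG.Γ, Coh g s}
      one_mem' := ⟨1, DG.Γ.one_mem, coh_one⟩
      mul_mem' := fun ⟨g, hg, h1⟩ ⟨h, hh, h2⟩ => ⟨_, DG.Γ.mul_mem hg hh, h1.mul h2⟩
      inv_mem' := fun ⟨g, hg, h1⟩ => ⟨_, DG.Γ.inv_mem hg, h1.inv⟩ }
  have hA : ∀ {i j k : Fin 5}, i ≠ j → j ≠ k → i ≠ k → Linked S (pz i) (pz j) :=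
    fun hij hjk hik => Linked.of_tc (pz_inj.ne hij) (pz_inj.ne hjk) (pz_inj.ne hik)
      ⟨_, DG.A_mem hij hjk hik, coh_A _ _ _⟩
  have hlinked : ∀ x y, Linked S x y := by
    refine linked_of_grid (o := 0) (T := Equiv.addRight (1, 0)) (U := Equiv.addRight (0, 1))
      ⟨_, DG.T_mem, coh_T⟩ ⟨_, DG.U_mem, coh_U⟩ (by ext z <;> simp) ?_ ?_ ?_
    · exact hA (i := 0) (j := 1) (k := 2) (by decide) (by decide) (by decide)
    · exact hA (i := 0) (j := 2) (k := 1) (by decide) (by decide) (by decide)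
    · intro z
      refine ⟨z.1, z.2, ?_⟩
      rw [Perm.mul_apply, addRight_zpow_apply, addRight_zpow_apply]
      ext <;> simp
  obtain ⟨g, hg, hgs⟩ : tc x y z ∈ S := tc_mem_of_linked hlinked hxy hyz hxz
  obtain ⟨R0, hR0⟩ := exists_coh1 hg
  obtain ⟨R, h0, h1, h2, h3⟩ : ∃ R, R0 ≤ R ∧ x ∈ box R ∧ y ∈ box R ∧ z ∈ box R :=
    ⟨R0 + nm x + nm y + nm z, by omega, box_mono (by omega) (mem_box_nm x),
      box_mono (by omega) (mem_box_nm y), box_mono (by omega) (mem_box_nm z)⟩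
  have hR : Coh1 g R := fun m y hy => hR0 m y fun h => hy (ball_mono h0 h)
  have hout : ((R + 1, 0) : ℤ × ℤ) ∉ box R := by rw [mem_box]; simp
  have hv : v g = 0 := by
    have h4 := coh_out hR hgs hout
    rw [tc_apply_of_ne] at h4
    · exact left_eq_add.1 h4
    · rintro rfl; exact hout h1
    · rintro rfl; exact hout h2
    · rintro rfl; exact hout h3
  refine ⟨g, hg, hv, ?_⟩
  have h4 : ∀ᶠ m in atTop, ∀ p ∈ box R, g.1 m (π m p) = π m (tc x y z p) :=
    (Finset.eventually_all _).2 fun p _ => hgs p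
  have h5 : ∀ᶠ m in atTop, ∀ p ∈ box R,
      tc (π m x) (π m y) (π m z) (π m p) = π m (tc x y z p) :=
    (Finset.eventually_all _).2 fun p _ => ev_tc x y z p
  filter_upwards [h4, h5] with m h4 h5
  ext1 q
  by_cases hq : q ∈ ball m R
  · obtain ⟨p, hp, rfl⟩ := Finset.mem_image.1 hq
    rw [h4 p hp, h5 p hp]
  · rw [hR m q hq, hv, map_zero, add_zero, tc_apply_of_ne]
    · rintro rfl; exact hq (π_mem_ball h1)
    · rintro rfl; exact hq (π_mem_ball h2)
    · rintro rfl; exact hq (π_mem_ball h3)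

/-- Elements without `ℤ × ℤ`-part have uniformly bounded supports. -/
lemma Coh1.support_card {g : Amb XG} {R : ℕ} (h : Coh1 g R) (hv : v g = 0) (m : ℕ) :
    (g.1 m).support.card ≤ (2 * R + 1) ^ 2 := by
  refine (Finset.card_le_card fun y hy => ?_).trans (card_ball m R)
  by_contra hy'
  rw [mem_support, h m y hy', hv, map_zero, add_zero] at hy
  exact hy rfl

end CoHopf

/-! ### Actions on the tori through an endomorphism -/

namespace CoHopf
open Equiv Equiv.Perm Filter

section perm
variable {Y : Type*} [Fintype Y] [DecidableEq Y]

lemma eq_one_of_commute (h4 : 4 ≤ Fintype.card Y) (c : Perm Y)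
    (h : ∀ a b d : Y, a ≠ b → b ≠ d → a ≠ d → c * tc a b d = tc a b d * c) : c = 1 := by
  ext y
  by_contra hy
  rw [Perm.one_apply] at hy
  obtain ⟨a, ha⟩ : ∃ a, a ∉ ({y, c y} : Finset Y) := by
    by_contra! hall
    have h1 := Finset.card_le_card (fun z _ => hall z : Finset.univ ⊆ ({y, c y} : Finset Y))
    have h2 := Finset.card_le_two (a := y) (b := c y)
    rw [Finset.card_univ] at h1
    omega
  obtain ⟨b, hb⟩ : ∃ b, b ∉ ({y, c y, a} : Finset Y) := by
    by_contra! hall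
    have h1 := Finset.card_le_card (fun z _ => hall z : Finset.univ ⊆ ({y, c y, a} : Finset Y))
    have h2 := Finset.card_le_three (a := y) (b := c y) (c := a)
    rw [Finset.card_univ] at h1
    omega
  simp only [Finset.mem_insert, Finset.mem_singleton, not_or] at ha hb
  have h1 := DFunLike.congr_fun (h y a b (Ne.symm ha.1) (Ne.symm hb.2.2) (Ne.symm hb.1)) y
  rw [Perm.mul_apply, Perm.mul_apply, tc_apply (Ne.symm ha.1) (Ne.symm hb.1),
    tc_apply_of_ne hy (Ne.symm ha.2) (Ne.symm hb.2.1)] at h1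
  exact ha.1 (c.injective h1)

/-- A permutation preserving a finite set has orbits on it no longer than its cardinality. -/
lemma exists_pow_fix {Y : Type*} (τ : Perm Y) (S : Finset Y) (hS : ∀ y ∈ S, τ y ∈ S) {y : Y} (hy : y ∈ S) :
    ∃ q, 0 < q ∧ q ≤ S.card ∧ (τ ^ q) y = y := by
  have hp : ∀ i : ℕ, (τ ^ i) y ∈ S := by
    intro i
    induction i with
    | zero => exact hy
    | succ i ih => rw [pow_succ', Perm.mul_apply]; exact hS _ ih
  obtain ⟨i, hi, j, hj, hij, he⟩ := Finset.exists_ne_map_eq_of_card_lt_of_maps_to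
    (s := Finset.range (S.card + 1)) (t := S) (f := fun i => (τ ^ i) y)
    (by rw [Finset.card_range]; omega) (fun i _ => hp i)
  rw [Finset.mem_range] at hi hj
  have key : ∀ i j, i < j → j < S.card + 1 → (τ ^ i) y = (τ ^ j) y →
      ∃ q, 0 < q ∧ q ≤ S.card ∧ (τ ^ q) y = y := by
    intro i j h1 h2 h3
    refine ⟨j - i, by omega, by omega, (τ ^ i).injective ?_⟩
    rw [h3, ← Perm.mul_apply, ← pow_add]
    congr 2
    omega
  obtain h | h := lt_or_gt_of_ne hij
  · exact key i j h hj he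
  · exact key j i h hi he.symm

lemma pow_factorial_eq_one (σ : Perm Y) {r : ℕ} (h : σ.support.card ≤ r) :
    σ ^ r.factorial = 1 := by
  rw [← orderOf_dvd_iff_pow_eq_one, ← lcm_cycleType, Multiset.lcm_dvd]
  intro b hb
  have h1 := Multiset.le_sum_of_mem hb
  rw [sum_cycleType] at h1
  have h2 := two_le_of_mem_cycleType hb
  exact Nat.dvd_factorial (by omega) (h1.trans h)

end perm

/-- A subgroup containing the translates of the diagonal three-cycles contains all elements with
trivial `ℤ × ℤ`-part. -/
lemma mem_of_conjs (S : Subgroup DG.Γ)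
    (h : ∀ w i j k (hij : i ≠ j) (hjk : j ≠ k) (hik : i ≠ k),
      (⟨_, DG.W_mem w⟩ * ⟨_, DG.A_mem hij hjk hik⟩ * (⟨_, DG.W_mem w⟩)⁻¹ : DG.Γ) ∈ S)
    (g : DG.Γ) (hg : v g.1 = 0) : g ∈ S := by
  have hle : Subgroup.closure DG.conjs ≤ S.map DG.Γ.subtype := by
    rw [Subgroup.closure_le]
    rintro _ ⟨w, i, j, k, hij, hjk, hik, rfl⟩
    exact ⟨_, h w i j k hij hjk hik, rfl⟩
  obtain ⟨y, hy, hyg⟩ := hle (DG.decomp_one g.2 hg)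
  exact (Subtype.ext hyg : y = g) ▸ hy

lemma card_XG (m : ℕ) : Fintype.card (XG m) = N m * N m := by
  rw [Fintype.card_prod, ZMod.card]

/-- Exact comparison of the size of an alternating factor with factorials. -/
lemma factorial_lt_card_alt {a n : ℕ} (h : a < N n * N n) :
    a.factorial < Nat.card (alternatingGroup (XG n)) := by
  have h1 := two_mul_card_alt (X := XG n) (by rw [card_XG]; have := N_ge n; nlinarith)
  have h2 := two_mul_factorial_lt h (by have := N_ge n; nlinarith)
  rw [card_XG] at h1
  omega

section Endo
variable (φ : DG.Γ →* DG.Γ)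

/-- The action on the `m`-th torus through the endomorphism. -/
def co (m : ℕ) : DG.Γ →* Perm (XG m) := (coord XG m).comp (DG.Γ.subtype.comp φ)

lemma co_apply (m : ℕ) (g : DG.Γ) : co φ m g = (φ g).1.1 m := rfl

/-- The restriction of the action on the `m`-th torus to the `n`-th alternating factor. -/
def ψ (m n : ℕ) : alternatingGroup (XG n) →* Perm (XG m) := (co φ m).comp (DG.ι n)

/-- The generator `T` as an element of the group. -/
def gT : DG.Γ := ⟨DG.T, DG.T_mem⟩
/-- The generator `U` as an element of the group. -/
def gU : DG.Γ := ⟨DG.U, DG.U_mem⟩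

/-- The `ℤ × ℤ`-part of the image of an element. -/
def vφ : DG.Γ →* Multiplicative (ℤ × ℤ) := (MonoidHom.snd _ _).comp (DG.Γ.subtype.comp φ)

lemma vφ_apply (g : DG.Γ) : vφ φ g = Multiplicative.ofAdd (v (φ g).1) := rfl

lemma v_phi_eq_zero (g : DG.Γ) (hg : v g.1 = 0) : v (φ g).1 = 0 := by
  refine mem_of_conjs (vφ φ).ker (fun w i j k hij hjk hik => ?_) g hg
  have hA : vφ φ ⟨_, DG.A_mem hij hjk hik⟩ = 1 := by
    have h1 : (⟨_, DG.A_mem hij hjk hik⟩ : DG.Γ) ^ 3 = 1 := by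
      refine Subtype.ext (Prod.ext (funext fun n => ?_) rfl)
      exact tc_pow_three ((DG.x_inj n).ne hij) ((DG.x_inj n).ne hjk) ((DG.x_inj n).ne hik)
    have h2 : vφ φ ⟨_, DG.A_mem hij hjk hik⟩ ^ 3 = 1 := by rw [← map_pow, h1, map_one]
    rw [vφ_apply, ← ofAdd_nsmul] at h2
    have h3 : 3 • v (φ ⟨_, DG.A_mem hij hjk hik⟩).1 = 0 := h2
    rw [vφ_apply, (smul_eq_zero.1 h3).resolve_left (by norm_num)]
    rfl
  rw [MonoidHom.mem_ker, map_mul, map_mul, map_inv, hA, mul_one, mul_inv_cancel]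

lemma v_phi_W (w : ℤ × ℤ) : v (φ ⟨_, DG.W_mem w⟩).1 =
    w.1 • v (φ gT).1 + w.2 • v (φ gU).1 := by
  have h : (⟨_, DG.W_mem w⟩ : DG.Γ) = gT ^ w.1 * gU ^ w.2 := rfl
  have h2 : vφ φ ⟨_, DG.W_mem w⟩ = vφ φ gT ^ w.1 * vφ φ gU ^ w.2 := by
    rw [h, map_mul, map_zpow, map_zpow]
  simp only [vφ_apply, ← ofAdd_zsmul, ← ofAdd_add] at h2
  exact h2

variable {φ}

lemma v_phi_W_ne_zero (hφ : Function.Injective φ) {w : ℤ × ℤ} (hw : w ≠ 0) :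
    v (φ ⟨_, DG.W_mem w⟩).1 ≠ 0 := by
  intro h
  obtain ⟨R, hR⟩ := exists_coh1 (φ ⟨_, DG.W_mem w⟩).2
  have h1 : (φ ⟨_, DG.W_mem w⟩) ^ ((2 * R + 1) ^ 2).factorial = 1 := by
    refine Subtype.ext (Prod.ext (funext fun m => ?_) ?_)
    · exact pow_factorial_eq_one _ (hR.support_card h m)
    · have : (φ ⟨_, DG.W_mem w⟩).1.2 = 1 := h
      simp [this]
  rw [← map_pow, ← map_one φ] at h1
  have h2 : vφ (MonoidHom.id _) (⟨_, DG.W_mem w⟩ ^ ((2 * R + 1) ^ 2).factorial) = 1 := by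
    rw [hφ h1, map_one]
  rw [map_pow, vφ_apply, ← ofAdd_nsmul] at h2
  have h3 : ((2 * R + 1) ^ 2).factorial • v (DG.W w) = 0 := h2
  rw [v_W] at h3
  exact hw ((smul_eq_zero.1 h3).resolve_left (Nat.factorial_ne_zero _))

lemma v_phi_T_ne_zero (hφ : Function.Injective φ) : v (φ gT).1 ≠ 0 := by
  have h := v_phi_W_ne_zero hφ (w := (1, 0)) (by decide)
  rw [v_phi_W] at h
  simpa using h

lemma even_co (m : ℕ) (g : DG.Γ) : sign (co φ m g) = 1 := DG.even (φ g).2 m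

lemma ψ_trivial_or (m n : ℕ) : (∀ α, ψ φ m n α = 1) ∨ Function.Injective (ψ φ m n) :=
  DG.ι_trivial_or n (co φ m)

lemma ψ_trivial_of_lt {m n : ℕ} (h : m < n) (α) : ψ φ m n α = 1 := by
  refine (ψ_trivial_or m n).elim (fun h => h α) fun h1 => ?_
  have h2 := Nat.card_le_card_of_injective _ h1
  have h3 := five_N h
  have h4 := N_ge m
  have h5 := factorial_lt_card_alt (a := N m * N m) (n := n) (by nlinarith)
  rw [Nat.card_perm, Nat.card_eq_fintype_card (α := XG m), card_XG] at h2
  omega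

/-- If the `m`-th alternating factor acts non-trivially on the `m`-th torus, then the whole group
acts on it through its `m`-th coordinate, since nothing centralizes the alternating group. -/
lemma co_eq {m : ℕ} (h : Function.Injective (ψ φ m m)) (g : DG.Γ) :
    co φ m g = ψ φ m m ⟨g.1.1 m, DG.even g.2 m⟩ := by
  let ψ' : alternatingGroup (XG m) →* alternatingGroup (XG m) :=
    (ψ φ m m).codRestrict _ fun α => even_co m _
  have hinj : Function.Injective ψ' := fun a b hab => h (congrArg Subtype.val hab)
  have hsurj : Function.Surjective ψ' := Finite.surjective_of_injective hinj
  set k := g * (DG.ι m ⟨g.1.1 m, DG.even g.2 m⟩)⁻¹ with hk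
  have hk1 : k.1.1 m = 1 := by simp [hk, Datum.ι]
  have hcomm : ∀ α, k * DG.ι m α = DG.ι m α * k := by
    intro α
    refine Subtype.ext (Prod.ext (funext fun n => ?_) (mul_comm _ _))
    obtain rfl | hn := eq_or_ne n m
    · change k.1.1 n * _ = _ * k.1.1 n
      rw [hk1, one_mul, mul_one]
    · have : (DG.ι m α).1.1 n = 1 := single_ne hn _
      change k.1.1 n * (DG.ι m α).1.1 n = (DG.ι m α).1.1 n * k.1.1 n
      rw [this, one_mul, mul_one]
  have hone : co φ m k = 1 := by
    refine eq_one_of_commute ?_ _ fun a b d hab hbd had => ?_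
    · rw [card_XG]; have := N_ge m; nlinarith
    · obtain ⟨α, hα⟩ := hsurj ⟨tc a b d, sign_tc hab hbd⟩
      have h1 : co φ m (DG.ι m α) = tc a b d := congrArg Subtype.val hα
      rw [← h1, ← map_mul, hcomm, map_mul]
  rw [hk, map_mul, map_inv, mul_inv_eq_one] at hone
  exact hone

end Endo
end CoHopf

/-! ### Every alternating factor survives on its own torus -/

namespace CoHopf
open Equiv Equiv.Perm Filter

/-- A point whose forward orbit avoids the centred square is just translated. -/
lemma Coh1.pow_of_orbit {g : Amb XG} {R m : ℕ} (h : Coh1 g R) {y : XG m}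
    (hy : ∀ k : ℕ, (g.1 m ^ k) y ∉ ball m R) (k : ℕ) : (g.1 m ^ k) y = y + π m (k • v g) := by
  induction k with
  | zero => simp
  | succ k ih =>
    rw [pow_succ', Perm.mul_apply, h m _ (hy k), ih, add_assoc, ← map_add, ← succ_nsmul]

/-- A point whose translates avoid the centred square is just translated. -/
lemma Coh1.pow_of_line {g : Amb XG} {R m : ℕ} (h : Coh1 g R) {y : XG m}
    (hy : ∀ k : ℕ, y + π m (k • v g) ∉ ball m R) (k : ℕ) : (g.1 m ^ k) y = y + π m (k • v g) := by
  induction k with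
  | zero => simp
  | succ k ih =>
    rw [pow_succ', Perm.mul_apply, ih, h m _ (hy k), add_assoc, ← map_add, ← succ_nsmul]

/-- An action of the `n`-th alternating group that commutes with a permutation `Θ` is not faithful
if the moved points lie in few orbits of `Θ`: it preserves each of these orbits, on which it acts
through the powers of `Θ`, so it is abelian. -/
lemma trivial_of_orbits {n : ℕ} {Y : Type*} (ψ : alternatingGroup (XG n) →* Perm Y)
    (Θ : Perm Y) (hΘ : ∀ α, Commute Θ (ψ α)) (B : Finset Y) (hB : B.card < N n * N n)
    (hmove : ∀ α y, ψ α y ≠ y → ∃ b ∈ B, ∃ l : ℤ, y = (Θ ^ l) b) :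
    ¬ Function.Injective ψ := by
  classical
  intro hinj
  have := DG.simple n
  let O : Y → Set Y := fun y => Set.range fun l : ℤ => (Θ ^ l) y
  have hOz : ∀ (l : ℤ) y, O ((Θ ^ l) y) = O y := by
    intro l y
    ext z
    constructor
    · rintro ⟨i, rfl⟩
      exact ⟨i + l, by simp only [zpow_add, Perm.mul_apply]⟩
    · rintro ⟨i, rfl⟩
      exact ⟨i - l, by simp only [← Perm.mul_apply, ← zpow_add, sub_add_cancel]⟩
  let τ : alternatingGroup (XG n) →* Perm (Set Y) :=
    { toFun := fun α => Equiv.Set.congr (ψ α)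
      map_one' := by ext s y; simp
      map_mul' := fun a b => by
        ext1 s
        simp [Set.image_image] }
  have hτ : ∀ α y, τ α (O y) = O (ψ α y) := by
    intro α y
    change ψ α '' Set.range _ = Set.range _
    rw [← Set.range_comp]
    congr 1
    ext1 l
    exact DFunLike.congr_fun ((hΘ α).zpow_left l).eq.symm y
  let S : Finset (Set Y) := (B.image O).filter fun s => ∃ α y, ψ α y ≠ y ∧ s = O y
  have hmS : ∀ α y, ψ α y ≠ y → O y ∈ S := by
    intro α y h
    obtain ⟨b, hb, l, hl⟩ := hmove α y h
    refine Finset.mem_filter.2 ⟨Finset.mem_image.2 ⟨b, hb, ?_⟩, α, y, h, rfl⟩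
    rw [hl, hOz]
  have hS : ∀ α, ∀ s ∈ S, τ α s ∈ S := by
    intro α s hs
    obtain ⟨-, β, y, hy, rfl⟩ := Finset.mem_filter.1 hs
    rw [hτ]
    refine hmS (α * β * α⁻¹) _ fun h => hy ?_
    rw [← Perm.mul_apply, ← map_mul, inv_mul_cancel_right, map_mul, Perm.mul_apply] at h
    exact (ψ α).injective h
  have hcard : S.card.factorial < Nat.card (alternatingGroup (XG n)) :=
    factorial_lt_card_alt (lt_of_le_of_lt
      ((Finset.card_filter_le _ _).trans Finset.card_image_le) hB)
  have hpow : ∀ α β y, ψ α y ≠ y → ∃ l : ℤ, ψ β y = (Θ ^ l) y := by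
    intro α β y h
    have h1 := fix_of_card τ S hS hcard β (hmS α y h)
    rw [hτ] at h1
    have h2 : ψ β y ∈ O (ψ β y) := ⟨0, by simp⟩
    rw [h1] at h2
    obtain ⟨l, hl⟩ := h2
    exact ⟨l, hl.symm⟩
  have hcomm : ∀ α β : alternatingGroup (XG n), α * β = β * α := by
    intro α β
    apply hinj
    ext1 y
    rw [map_mul, map_mul, Perm.mul_apply, Perm.mul_apply]
    by_cases h : ∃ γ, ψ γ y ≠ y
    · obtain ⟨γ, hγ⟩ := h
      obtain ⟨l, hl⟩ := hpow γ α y hγ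
      obtain ⟨l', hl'⟩ := hpow γ β y hγ
      rw [hl, hl', ← Perm.mul_apply, ← Perm.mul_apply, ← ((hΘ α).zpow_left l').eq,
        ← ((hΘ β).zpow_left l).eq, Perm.mul_apply, Perm.mul_apply, hl, hl', ← Perm.mul_apply,
        ← Perm.mul_apply, ← zpow_add, ← zpow_add, add_comm]
    · push Not at h
      rw [h β, h α, h β]
  have hx : ∀ {i j : Fin 5}, i ≠ j → DG.x n i ≠ DG.x n j := fun h => (DG.x_inj n).ne h
  refine tc_ne_one (hx (i := 0) (j := 1) (by decide)) (hx (i := 0) (j := 2) (by decide))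
    (eq_one_of_commute ?_ _ fun a b d hab hbd had => ?_)
  · rw [card_XG]; have := N_ge n; nlinarith
  · exact congrArg Subtype.val
      (hcomm ⟨_, sign_tc (hx (by decide)) (hx (by decide))⟩ ⟨_, sign_tc hab hbd⟩)

section Endo
variable {φ : DG.Γ →* DG.Γ}

lemma gT_pow_coord {n q : ℕ} (h : N n ∣ q) : (gT ^ q).1.1 n = 1 := by
  change (DG.t n) ^ q = 1
  obtain ⟨c, rfl⟩ := h
  have : DG.t n ^ N n = 1 := DG.t_per n
  rw [pow_mul, this, one_pow]

/-- The supports of the images of the diagonal three-cycles are uniformly bounded. -/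
lemma exists_support_bound (φ : DG.Γ →* DG.Γ) : ∃ r : ℕ, ∀ (i j k : Fin 5) (hij : i ≠ j)
    (hjk : j ≠ k) (hik : i ≠ k) (m : ℕ), (co φ m ⟨_, DG.A_mem hij hjk hik⟩).support.card ≤ r := by
  have : ∀ i j k : Fin 5, ∀ᶠ r in atTop, ∀ (hij : i ≠ j) (hjk : j ≠ k) (hik : i ≠ k) (m : ℕ),
      (co φ m ⟨_, DG.A_mem hij hjk hik⟩).support.card ≤ r := by
    intro i j k
    by_cases h : i ≠ j ∧ j ≠ k ∧ i ≠ k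
    · obtain ⟨R, hR⟩ := exists_coh1 (φ ⟨_, DG.A_mem h.1 h.2.1 h.2.2⟩).2
      filter_upwards [eventually_ge_atTop ((2 * R + 1) ^ 2)] with r hr _ _ _ m
      exact (hR.support_card (v_phi_eq_zero φ _ rfl) m).trans hr
    · exact .of_forall fun r hij hjk hik => absurd ⟨hij, hjk, hik⟩ h
  have h2 := eventually_all.2 fun i => eventually_all.2 fun j => eventually_all.2 (this i j)
  exact h2.exists

/-- If the `m`-th alternating factor dies on the `m`-th torus, so do all other factors, up to
finitely many exceptions independent of `m`. All elements without `ℤ × ℤ`-part and with trivial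
coordinates below `m` then die on the `m`-th torus, so the `N (m - 1)`-th power of the image of `T`
centralizes the image. Hence the orbits of the image of `T` on moved points are so short that they
have to meet a square of bounded size, and there are few of them. -/
lemma off_diag_trivial (hφ : Function.Injective φ) : ∃ m1, ∀ m, m1 ≤ m → (∀ α, ψ φ m m α = 1) →
    ∀ n, m1 ≤ n → n < m → ∀ α, ψ φ m n α = 1 := by
  obtain ⟨R, hR⟩ := exists_coh1 (φ gT).2
  obtain ⟨r, hr⟩ := exists_support_bound φ
  have hv := v_phi_T_ne_zero hφ
  set V := nm (v (φ gT).1) with hV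
  refine ⟨(2 * R + 1) ^ 2 + r * V, fun m hm hmm n hn hnm => ?_⟩
  refine (ψ_trivial_or m n).resolve_right ?_
  obtain ⟨p, rfl⟩ : ∃ p, m = p + 1 := ⟨m - 1, by omega⟩
  have hkill : ∀ g : DG.Γ, v g.1 = 0 → (∀ n < p + 1, g.1.1 n = 1) → co φ (p + 1) g = 1 := by
    refine DG.kills (co φ (p + 1)) (p + 1) fun n hn α hα => ?_
    obtain rfl | h := hn.eq_or_lt
    · exact hmm ⟨α, hα⟩
    · exact ψ_trivial_of_lt h ⟨α, hα⟩
  set T' := co φ (p + 1) gT with hT'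
  have hcomm : ∀ g : DG.Γ, Commute (T' ^ N p) (co φ (p + 1) g) := by
    intro g
    have h1 := hkill (gT ^ N p * g * (gT ^ N p)⁻¹ * g⁻¹) ?_ ?_
    · rw [map_mul, map_mul, map_mul, map_inv, map_inv, map_pow, mul_inv_eq_one,
        mul_inv_eq_iff_eq_mul] at h1
      exact h1
    · change v ((gT ^ N p).1 * g.1 * ((gT ^ N p).1)⁻¹ * g.1⁻¹) = 0
      rw [v_mul, v_mul, v_mul, v_inv, v_inv]
      abel
    · intro n hn
      change (gT ^ N p).1.1 n * g.1.1 n * ((gT ^ N p).1.1 n)⁻¹ * (g.1.1 n)⁻¹ = 1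
      rw [gT_pow_coord (show N n ∣ N p from Nat.factorial_dvd_factorial (by omega))]
      simp
  -- every moved point returns to itself under a small power of the `N p`-th power of `T'`
  have hret : ∀ (g : DG.Γ) y, v g.1 = 0 → co φ (p + 1) g y ≠ y →
      ∃ q, 0 < q ∧ q ≤ r ∧ ((T' ^ N p) ^ q) y = y := by
    intro g y hg hy
    by_contra hno
    refine hy (mem_of_conjs ((MulAction.stabilizer (Perm (XG (p + 1))) y).comap (co φ (p + 1)))
      (fun w i j k hij hjk hik => ?_) g hg)
    set a : DG.Γ := ⟨_, DG.W_mem w⟩ * ⟨_, DG.A_mem hij hjk hik⟩ * (⟨_, DG.W_mem w⟩)⁻¹ with ha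
    rw [Subgroup.mem_comap, MulAction.mem_stabilizer_iff, Perm.smul_def]
    by_contra hay
    obtain ⟨q, hq0, hqr, hq⟩ := exists_pow_fix (T' ^ N p) (co φ (p + 1) a).support
      (fun z hz => by
        rw [mem_support] at hz ⊢
        intro h
        rw [← Perm.mul_apply, ← (hcomm a).eq, Perm.mul_apply] at h
        exact hz ((T' ^ N p).injective h)) (mem_support.2 hay)
    refine hno ⟨q, hq0, hqr.trans ?_, hq⟩
    rw [ha, map_mul, map_mul, map_inv, card_support_conj]
    exact hr i j k hij hjk hik _
  -- hence its orbit meets the square of radius `R`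
  have hball : ∀ (g : DG.Γ) y, v g.1 = 0 → co φ (p + 1) g y ≠ y →
      ∃ j : ℕ, (T' ^ j) y ∈ ball (p + 1) R := by
    intro g y hg hy
    by_contra! hno
    obtain ⟨q, hq0, hqr, hq⟩ := hret g y hg hy
    have htr : ∀ k : ℕ, (T' ^ k) y = y + π (p + 1) (k • v (φ gT).1) := hR.pow_of_orbit hno
    rw [← pow_mul, htr, add_eq_left, π_eq_zero] at hq
    have hz : ∀ z : ℤ, z.natAbs ≤ V → (N (p + 1) : ℤ) ∣ (N p * q) • z → z = 0 := by
      intro z hzV hz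
      rw [nsmul_eq_mul, N_succ] at hz
      push_cast at hz
      rw [mul_comm, mul_assoc, mul_dvd_mul_iff_left (by have := N_pos p; positivity)] at hz
      have h1 : ((q : ℤ) * z).natAbs ≤ r * V := by
        rw [Int.natAbs_mul, Int.natAbs_natCast]
        exact Nat.mul_le_mul hqr hzV
      have h2 := Int.eq_zero_of_abs_lt_dvd hz (by
        rw [Int.abs_eq_natAbs]
        have : 0 ≤ (2 * R + 1) ^ 2 := Nat.zero_le _
        omega)
      rcases mul_eq_zero.1 h2 with h3 | h3
      · omega
      · exact h3
    refine hv (Prod.ext (hz _ ?_ hq.1) (hz _ ?_ hq.2)) <;> rw [hV, nm] <;> omega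
  classical
  refine trivial_of_orbits (ψ φ (p + 1) n) (T' ^ N n) ?_
    ((ball (p + 1) R ×ˢ Finset.range (N n)).image fun b => (T' ^ b.2) b.1) ?_ ?_
  · intro α
    have h1 : Commute (gT ^ N n) (DG.ι n α) := by
      refine Subtype.ext (Prod.ext (funext fun k => ?_) (mul_comm _ _))
      change (gT ^ N n).1.1 k * (DG.ι n α).1.1 k = (DG.ι n α).1.1 k * (gT ^ N n).1.1 k
      obtain rfl | hk := eq_or_ne k n
      · rw [gT_pow_coord dvd_rfl, one_mul, mul_one]
      · have : (DG.ι n α).1.1 k = 1 := single_ne hk _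
        rw [this, one_mul, mul_one]
    rw [hT', ← map_pow]
    exact h1.map (co φ (p + 1))
  · refine lt_of_le_of_lt Finset.card_image_le ?_
    rw [Finset.card_product, Finset.card_range]
    have h1 := card_ball (p + 1) R
    have h2 := le_N n
    exact Nat.mul_lt_mul_of_pos_right (by omega) (N_pos n)
  · intro α y hy
    obtain ⟨j, hj⟩ := hball (DG.ι n α) y rfl hy
    have hN : (N n : ℤ) ≠ 0 := by have := N_pos n; omega
    refine ⟨_, Finset.mem_image.2 ⟨((T' ^ j) y, ((-(j : ℤ)) % N n).toNat), Finset.mem_product.2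
      ⟨hj, Finset.mem_range.2 ?_⟩, rfl⟩, (-(j : ℤ)) / N n, ?_⟩
    · have := Int.emod_lt_of_pos (-(j : ℤ)) (b := N n) (by have := N_pos n; omega)
      have := Int.emod_nonneg (-(j : ℤ)) hN
      omega
    · have h1 : (((-(j : ℤ)) % N n).toNat : ℤ) = (-(j : ℤ)) % N n :=
        Int.toNat_of_nonneg (Int.emod_nonneg _ hN)
      rw [← zpow_natCast T' (Int.toNat _), h1, ← zpow_natCast, ← zpow_natCast, ← zpow_mul,
        ← Perm.mul_apply, ← Perm.mul_apply, ← zpow_add, ← zpow_add]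
      have h2 := Int.mul_ediv_add_emod (-(j : ℤ)) (N n)
      rw [h2, neg_add_cancel]
      rfl

/-- Every alternating factor acts faithfully on the corresponding torus. -/
lemma diag_injective (hφ : Function.Injective φ) (m : ℕ) : Function.Injective (ψ φ m m) := by
  obtain ⟨m1, h1⟩ := off_diag_trivial hφ
  -- a dying factor survives on some larger torus, where the factor of the same index dies
  have hnext : ∀ n, (∀ α, ψ φ n n α = 1) → ∃ m, n < m ∧ (∀ α, ψ φ m m α = 1) ∧
      ¬ ∀ α, ψ φ m n α = 1 := by
    intro n hn
    obtain ⟨m, hm⟩ : ∃ m, ¬ ∀ α, ψ φ m n α = 1 := by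
      by_contra! hall
      have := DG.simple n
      obtain ⟨α, hα⟩ := exists_ne (1 : alternatingGroup (XG n))
      have h2 : φ (DG.ι n α) = φ 1 := by
        rw [map_one]
        exact Subtype.ext (Prod.ext (funext fun m => hall m α) (v_phi_eq_zero φ _ rfl))
      have h3 := congrArg (fun g : DG.Γ => g.1.1 n) (hφ h2)
      apply hα
      ext1
      rw [← single_same (X := XG) n α.1]
      exact h3
    have hnm : n < m := by
      obtain h | rfl | h := lt_trichotomy m n
      · exact absurd (ψ_trivial_of_lt h) hm
      · exact absurd hn hm
      · exact h
    refine ⟨m, hnm, (ψ_trivial_or m m).resolve_right fun hinj => hm fun α => ?_, hm⟩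
    have h2 := co_eq hinj (DG.ι n α)
    have h3 : (DG.ι n α).1.1 m = 1 := single_ne hnm.ne' _
    have h4 : (⟨(DG.ι n α).1.1 m, DG.even (DG.ι n α).2 m⟩ : alternatingGroup (XG m)) = 1 :=
      Subtype.ext h3
    rw [h4, map_one] at h2
    exact h2
  refine (ψ_trivial_or m m).resolve_left fun hm => ?_
  have hbad : ∀ k, ∃ n, k ≤ n ∧ ∀ α, ψ φ n n α = 1 := by
    intro k
    induction k with
    | zero => exact ⟨m, Nat.zero_le _, hm⟩
    | succ k ih =>
      obtain ⟨n, hn, hn1⟩ := ih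
      obtain ⟨n', h2, h3, -⟩ := hnext n hn1
      exact ⟨n', by omega, h3⟩
  obtain ⟨n, hn, hn1⟩ := hbad m1
  obtain ⟨n', h2, h3, h4⟩ := hnext n hn1
  exact h4 (h1 n' (by omega) h3 n hn h2)

end Endo
end CoHopf

/-! ### Surjectivity of injective endomorphisms -/

namespace CoHopf
open Equiv Equiv.Perm Filter

lemma DG_W_apply (w : ℤ × ℤ) (m : ℕ) (y : XG m) : (DG.W w).1 m y = y + π m w := by
  change (Equiv.addRight ((1, 0) : XG m) ^ w.1 * Equiv.addRight ((0, 1) : XG m) ^ w.2) y = _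
  rw [Perm.mul_apply, addRight_zpow_apply, addRight_zpow_apply, π_apply]
  ext <;> simp

lemma DG_W_pow_apply (w : ℤ × ℤ) (m : ℕ) (k : ℕ) (y : XG m) :
    ((DG.W w).1 m ^ k) y = y + π m (k • w) := by
  induction k with
  | zero => simp
  | succ k ih => rw [pow_succ', Perm.mul_apply, ih, DG_W_apply, add_assoc, ← map_add, ← succ_nsmul]

lemma Coh.pow {g : Amb XG} {s : Perm (ℤ × ℤ)} (h : Coh g s) (k : ℕ) : Coh (g ^ k) (s ^ k) := by
  induction k with
  | zero => exact coh_one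
  | succ k ih => rw [pow_succ, pow_succ]; exact ih.mul h

section Endo
variable {φ : DG.Γ →* DG.Γ}

/-- On all but finitely many tori the action through an injective endomorphism is conjugate to the
original one. -/
lemma exists_conjugators (hφ : Function.Injective φ) : ∃ h : ∀ m, Perm (XG m),
    ∀ᶠ m in atTop, ∀ (g : DG.Γ) (y : XG m), h m (co φ m g y) = g.1.1 m (h m y) := by
  obtain ⟨r, hr⟩ := exists_support_bound φ
  have hex : ∀ m, r ≤ m → ∃ h : Perm (XG m),
      ∀ (g : DG.Γ) (y : XG m), h (co φ m g y) = g.1.1 m (h y) := by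
    intro m hm
    have hcard : m + 8 ≤ Fintype.card (XG m) := DG.card_ge m
    obtain ⟨h, hh⟩ := exists_conj (σ := ψ φ m m) (by omega) (diag_injective hφ m) fun x => by
      obtain ⟨w, hw⟩ := π_surjective m (x - π m (pz 0))
      have h01 : (0 : Fin 5) ≠ 1 := by decide
      have h12 : (1 : Fin 5) ≠ 2 := by decide
      have h02 : (0 : Fin 5) ≠ 2 := by decide
      set a : DG.Γ := ⟨_, DG.W_mem w⟩ * ⟨_, DG.A_mem h01 h12 h02⟩ * (⟨_, DG.W_mem w⟩)⁻¹ with ha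
      have ha1 : a.1.1 m = tc ((DG.W w).1 m (DG.x m 0)) ((DG.W w).1 m (DG.x m 1))
          ((DG.W w).1 m (DG.x m 2)) := tc_conj _ _ _ _
      have hx : ∀ {i j : Fin 5}, i ≠ j → (DG.W w).1 m (DG.x m i) ≠ (DG.W w).1 m (DG.x m j) :=
        fun h => ((DG.W w).1 m).injective.ne ((DG.x_inj m).ne h)
      refine ⟨⟨a.1.1 m, DG.even a.2 m⟩, ?_, ?_, ?_⟩
      · change (a.1.1 m).IsThreeCycle
        rw [ha1]
        exact isThreeCycle_tc (hx h01) (hx h12) (hx h02)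
      · have hx0 : x = (DG.W w).1 m (DG.x m 0) := by rw [DG_W_apply, DG_x, hw]; abel
        change a.1.1 m x ≠ x
        rw [ha1, hx0, tc_apply (hx h01) (hx h02)]
        exact (hx h01).symm
      · rw [← co_eq (diag_injective hφ m), ha, map_mul, map_mul, map_inv, card_support_conj]
        have := hr 0 1 2 h01 h12 h02 m
        omega
    refine ⟨h, fun g y => ?_⟩
    rw [co_eq (diag_injective hφ m), hh]
  classical
  refine ⟨fun m => if hm : r ≤ m then (hex m hm).choose else 1, ?_⟩
  filter_upwards [eventually_ge_atTop r] with m hm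
  rw [dif_pos hm]
  exact (hex m hm).choose_spec

/-- If the `ℤ × ℤ`-part of the image of `T ^ i * U ^ j` is divisible by `p`, then so are `i` and
`j`: the `N m / p`-th power of the image fixes points of a large torus, hence by conjugation so does
the `N m / p`-th power of the translation itself. -/
lemma dvd_of_dvd (hφ : Function.Injective φ) {p : ℕ} (hp : 0 < p) {w z : ℤ × ℤ}
    (h : v (φ ⟨_, DG.W_mem w⟩).1 = p • z) : (p : ℤ) ∣ w.1 ∧ (p : ℤ) ∣ w.2 := by
  obtain ⟨hc, hconj⟩ := exists_conjugators hφ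
  obtain ⟨R, hR⟩ := exists_coh1 (φ ⟨_, DG.W_mem w⟩).2
  obtain ⟨m, hm, hmp, hmR⟩ := (hconj.and ((eventually_ge_atTop p).and
    (eventually_ge_atTop ((2 * R + 1) ^ 2)))).exists
  have hN := N_pos m
  obtain ⟨y, hy⟩ : ∃ y : XG m, ∀ k : ℕ, y + π m (k • (p • z)) ∉ ball m R := by
    by_contra! hall
    have hsub : (Finset.univ : Finset (XG m)) ⊆ (ball m R ×ˢ Finset.range (N m)).image
        fun b => b.1 - π m (b.2 • (p • z)) := by
      intro y _
      obtain ⟨k, hk⟩ := hall y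
      refine Finset.mem_image.2 ⟨(_, k % N m), Finset.mem_product.2
        ⟨hk, Finset.mem_range.2 (Nat.mod_lt _ hN)⟩, ?_⟩
      have h1 : π m (k • (p • z)) = π m ((k % N m) • (p • z)) := by
        conv_lhs => rw [← Nat.mod_add_div k (N m)]
        rw [add_smul, map_add, mul_smul, add_eq_left, π_eq_zero]
        exact ⟨⟨_, nsmul_eq_mul _ _⟩, ⟨_, nsmul_eq_mul _ _⟩⟩
      simp only [h1, add_sub_cancel_right]
    have h1 := (Finset.card_le_card hsub).trans Finset.card_image_le
    rw [Finset.card_univ, card_XG, Finset.card_product, Finset.card_range] at h1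
    have h2 := card_ball m R
    have h3 := le_N m
    have h4 := Nat.mul_lt_mul_of_pos_right (show (ball m R).card < N m by omega) hN
    omega
  rw [← h] at hy
  obtain ⟨c, hcN⟩ := dvd_N (n := m) hp (by omega)
  have h1 : (co φ m ⟨_, DG.W_mem w⟩ ^ c) y = y := by
    rw [co_apply, hR.pow_of_line hy, h, add_eq_left, π_eq_zero, ← mul_smul, mul_comm, ← hcN]
    exact ⟨⟨_, nsmul_eq_mul _ _⟩, ⟨_, nsmul_eq_mul _ _⟩⟩
  have h2 := hm (⟨_, DG.W_mem w⟩ ^ c) y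
  rw [map_pow, h1] at h2
  have h3 : hc m y = ((DG.W w).1 m ^ c) (hc m y) := h2
  rw [DG_W_pow_apply, left_eq_add, π_eq_zero, hcN] at h3
  have hc0 : (c : ℤ) ≠ 0 := by
    rintro h0
    rw [Nat.cast_eq_zero] at h0
    rw [hcN, h0] at hN
    omega
  have h4 : ∀ a : ℤ, ((p * c : ℕ) : ℤ) ∣ c • a → (p : ℤ) ∣ a := by
    intro a ha
    rw [nsmul_eq_mul, Nat.cast_mul, mul_comm (p : ℤ)] at ha
    exact (mul_dvd_mul_iff_left hc0).1 ha
  exact ⟨h4 _ h3.1, h4 _ h3.2⟩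

/-- The endomorphism induced on the `ℤ × ℤ`-part is surjective. -/
lemma v_phi_surjective (hφ : Function.Injective φ) (z : ℤ × ℤ) :
    ∃ w, v (φ ⟨_, DG.W_mem w⟩).1 = z := by
  obtain ⟨⟨a, b⟩, h1⟩ : ∃ v1 : ℤ × ℤ, v1 = v (φ gT).1 := ⟨_, rfl⟩
  obtain ⟨⟨a', b'⟩, h2⟩ : ∃ v2 : ℤ × ℤ, v2 = v (φ gU).1 := ⟨_, rfl⟩
  have hW : ∀ i j : ℤ, v (φ ⟨_, DG.W_mem (i, j)⟩).1 = (i * a + j * a', i * b + j * b') := by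
    intro i j
    rw [v_phi_W, ← h1, ← h2]
    simp
  have hdet : IsUnit (a * b' - b * a') := by
    rw [Int.isUnit_iff_natAbs_eq]
    by_contra hne
    obtain ⟨p, hp, hpd⟩ := Nat.exists_prime_and_dvd hne
    rw [← Int.natCast_dvd] at hpd
    obtain ⟨d, hd⟩ := hpd
    have h3 := dvd_of_dvd hφ hp.pos (w := (b', -b)) (z := (d, 0)) (by
      rw [hW, Prod.smul_mk, nsmul_eq_mul, nsmul_eq_mul]; ext
      · change _ = (p : ℤ) * d; linarith
      · change _ = (p : ℤ) * 0; ring)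
    have h4 := dvd_of_dvd hφ hp.pos (w := (a', -a)) (z := (0, -d)) (by
      rw [hW, Prod.smul_mk, nsmul_eq_mul, nsmul_eq_mul]; ext
      · change _ = (p : ℤ) * 0; ring
      · change _ = (p : ℤ) * -d; linarith)
    obtain ⟨x, hx⟩ := (dvd_neg.1 h4.2 : (p : ℤ) ∣ a)
    obtain ⟨y, hy⟩ := (dvd_neg.1 h3.2 : (p : ℤ) ∣ b)
    have h5 := dvd_of_dvd hφ hp.pos (w := (1, 0)) (z := (x, y)) (by
      rw [hW, hx, hy]; ext <;> simp)
    have h6 := Int.natCast_dvd_natCast.1 (show ((p : ℕ) : ℤ) ∣ ((1 : ℕ) : ℤ) from h5.1)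
    exact hp.one_lt.ne' (Nat.dvd_one.1 h6)
  obtain ⟨x, y⟩ := z
  have hD := Int.isUnit_mul_self hdet
  set D := a * b' - b * a' with hDdef
  refine ⟨(D * (x * b' - y * a'), D * (y * a - x * b)), ?_⟩
  rw [hW]
  ext
  · calc _ = D * (a * b' - b * a') * x := by ring
      _ = x := by rw [← hDdef, hD, one_mul]
  · calc _ = D * (a * b' - b * a') * y := by ring
      _ = y := by rw [← hDdef, hD, one_mul]

/-- The complement of a square in the grid is connected. -/
lemma outside_connected {P : ℤ × ℤ → Prop} {R : ℕ}
    (h1 : ∀ z ∉ box R, P z ↔ P (z + (1, 0))) (h2 : ∀ z ∉ box R, P z ↔ P (z + (0, 1)))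
    {z z' : ℤ × ℤ} (hz : z ∉ box R) (hz' : z' ∉ box R) : P z ↔ P z' := by
  have hline : ∀ Q : ℤ → Prop, (∀ a, Q a ↔ Q (a + 1)) → ∀ a b, Q a ↔ Q b := by
    intro Q hQ
    have : ∀ a, Q a ↔ Q 0 := by
      intro a
      induction a using Int.induction_on with
      | zero => rfl
      | succ i ih => rw [← hQ, ih]
      | pred i ih => rw [← ih, hQ (-(i : ℤ) - 1), sub_add_cancel]
    exact fun a b => (this a).trans (this b).symm
  have hrow : ∀ b : ℤ, ¬ (-(R : ℤ) ≤ b ∧ b ≤ R) → ∀ a a', P (a, b) ↔ P (a', b) := fun b hb =>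
    hline (fun a => P (a, b)) fun a => by
      have := h1 (a, b) (by rw [mem_box]; tauto)
      simpa using this
  have hcol : ∀ a : ℤ, ¬ (-(R : ℤ) ≤ a ∧ a ≤ R) → ∀ b b', P (a, b) ↔ P (a, b') := fun a ha =>
    hline (fun b => P (a, b)) fun b => by
      have := h2 (a, b) (by rw [mem_box]; tauto)
      simpa using this
  have hc : ¬ (-(R : ℤ) ≤ (R : ℤ) + 1 ∧ (R : ℤ) + 1 ≤ R) := by omega
  have key : ∀ z ∉ box R, P z ↔ P ((R : ℤ) + 1, (R : ℤ) + 1) := by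
    rintro ⟨a, b⟩ hz
    rw [mem_box, not_and_or] at hz
    obtain hz | hz := hz
    · exact (hcol a hz b (R + 1)).trans (hrow _ hc a (R + 1))
    · exact (hrow b hz a (R + 1)).trans (hcol _ hc b (R + 1))
  exact (key z hz).trans (key z' hz').symm

/-- The conjugators map each point of the grid to points at bounded distance from the origin. If
this holds for one point, it holds for its orbit under the limit of any element mapped to a
translation; outside a large square these limits contain the unit translations, and no orbit stays
inside. It holds for any point moved by the limit of the image of a three-cycle on marked points. -/
lemma conjugators_local (hφ : Function.Injective φ) {h : ∀ m, Perm (XG m)}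
    (hh : ∀ᶠ m in atTop, ∀ (g : DG.Γ) (y : XG m), h m (co φ m g y) = g.1.1 m (h m y))
    (z : ℤ × ℤ) : ∃ R', ∀ᶠ m in atTop, h m (π m z) ∈ ball m R' := by
  let P : ℤ × ℤ → Prop := fun z => ∃ R', ∀ᶠ m in atTop, h m (π m z) ∈ ball m R'
  have hP : ∀ w s, Coh (φ ⟨_, DG.W_mem w⟩).1 s → ∀ z, P z ↔ P (s z) := by
    intro w s hs z
    have h1 : ∀ᶠ m in atTop, h m (π m (s z)) = h m (π m z) + π m w := by
      filter_upwards [hh, hs z] with m h1 h2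
      rw [← h2, ← co_apply, h1, DG_W_apply]
    constructor
    · rintro ⟨R', hR'⟩
      refine ⟨R' + nm w, ?_⟩
      filter_upwards [h1, hR'] with m h1 h2
      rw [h1]
      exact ball_add h2 w
    · rintro ⟨R', hR'⟩
      refine ⟨R' + nm (-w), ?_⟩
      filter_upwards [h1, hR'] with m h1 h2
      rw [h1] at h2
      have h3 := ball_add h2 (-w)
      rwa [map_neg, add_neg_cancel_right] at h3
  obtain ⟨w1, hw1⟩ := v_phi_surjective hφ (1, 0)
  obtain ⟨w2, hw2⟩ := v_phi_surjective hφ (0, 1)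
  obtain ⟨s1, hs1⟩ := exists_coh (φ ⟨_, DG.W_mem w1⟩).2
  obtain ⟨s2, hs2⟩ := exists_coh (φ ⟨_, DG.W_mem w2⟩).2
  obtain ⟨R1, hR1⟩ := exists_coh1 (φ ⟨_, DG.W_mem w1⟩).2
  obtain ⟨R2, hR2⟩ := exists_coh1 (φ ⟨_, DG.W_mem w2⟩).2
  have hout : ∀ z z', z ∉ box (R1 + R2) → z' ∉ box (R1 + R2) → (P z ↔ P z') := by
    intro z z'
    refine outside_connected (fun z hz => ?_) (fun z hz => ?_)
    · rw [hP w1 s1 hs1 z, coh_out hR1 hs1 (fun h => hz (box_mono (by omega) h)), hw1]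
    · rw [hP w2 s2 hs2 z, coh_out hR2 hs2 (fun h => hz (box_mono (by omega) h)), hw2]
  -- no orbit of the limit of the image of a translation stays in a square
  have hesc : ∀ z, ∃ z', z' ∉ box (R1 + R2) ∧ (P z ↔ P z') := by
    intro z
    by_contra hall
    have hk : ∀ k : ℕ, P z ↔ P ((s1 ^ k) z) := by
      intro k
      induction k with
      | zero => rfl
      | succ k ih => rw [ih, pow_succ', Perm.mul_apply]; exact hP w1 s1 hs1 _
    have hin : ∀ k : ℕ, (s1 ^ k) z ∈ box (R1 + R2) := by
      intro k
      by_contra hko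
      exact hall ⟨_, hko, hk k⟩
    classical
    obtain ⟨q, hq0, -, hq⟩ := exists_pow_fix s1
      ((box (R1 + R2)).filter fun y => ∀ k : ℕ, (s1 ^ k) y ∈ box (R1 + R2)) (fun y hy => by
        rw [Finset.mem_filter] at hy ⊢
        refine ⟨by simpa using hy.2 1, fun k => ?_⟩
        have := hy.2 (k + 1)
        rwa [pow_succ, Perm.mul_apply] at this)
      (Finset.mem_filter.2 ⟨by simpa using hin 0, hin⟩)
    have h0 : q • w1 = 0 := by
      refine eq_of_freq (Eventually.frequently ?_)
      filter_upwards [hh, hs1.pow q z] with m h1 h2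
      have h3 := h1 (⟨_, DG.W_mem w1⟩ ^ q) (π m z)
      have h4 : co φ m (⟨_, DG.W_mem w1⟩ ^ q) (π m z) = π m z := by
        rw [map_pow, co_apply]
        rw [hq] at h2
        exact h2
      rw [h4] at h3
      have h5 : h m (π m z) = ((DG.W w1).1 m ^ q) (h m (π m z)) := h3
      rw [DG_W_pow_apply, left_eq_add] at h5
      rw [h5, map_zero]
    have hw0 : w1 = 0 := (smul_eq_zero.1 h0).resolve_left hq0.ne'
    rw [hw0, v_phi_W] at hw1
    simp only [Prod.fst_zero, Prod.snd_zero, zero_smul, add_zero] at hw1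
    exact absurd (congrArg Prod.fst hw1) (by decide)
  -- a point moved by the image of a three-cycle
  have hbase : ∃ z, P z := by
    have h01 : (0 : Fin 5) ≠ 1 := by decide
    have h12 : (1 : Fin 5) ≠ 2 := by decide
    have h02 : (0 : Fin 5) ≠ 2 := by decide
    set A : DG.Γ := ⟨_, DG.A_mem h01 h12 h02⟩ with hA
    obtain ⟨s, hs⟩ := exists_coh (φ A).2
    have hne : s ≠ 1 := by
      rintro rfl
      obtain ⟨m, h1, h2⟩ := (hh.and (ev_one_of_coh (φ A).2 (v_phi_eq_zero φ A rfl) hs)).exists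
      refine tc_ne_one ((DG.x_inj m).ne h01) ((DG.x_inj m).ne h02) ?_
      ext1 y
      have h3 := h1 A ((h m)⁻¹ y)
      rw [co_apply, h2] at h3
      have h4 : y = A.1.1 m y := by simpa using h3
      exact h4.symm
    obtain ⟨z, hz⟩ : ∃ z, s z ≠ z := by
      by_contra! hall
      exact hne (Equiv.ext hall)
    refine ⟨z, 2, ?_⟩
    filter_upwards [hh, hs z, ev_inj (s z) z] with m h1 h2 h3
    by_contra hball
    have h4 : ∀ i, h m (π m z) ≠ DG.x m i := by
      intro i hi
      rw [DG_x] at hi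
      exact hball (hi ▸ π_mem_ball (pz_box i))
    have h5 := h1 A (π m z)
    have h6 : A.1.1 m (h m (π m z)) = h m (π m z) := tc_apply_of_ne (h4 0) (h4 1) (h4 2)
    rw [h6, co_apply, h2] at h5
    exact hz (h3.1 ((h m).injective h5))
  obtain ⟨z0, hz0⟩ := hbase
  obtain ⟨z1, h1, h2⟩ := hesc z0
  obtain ⟨z2, h3, h4⟩ := hesc z
  exact h4.2 ((hout _ _ h1 h3).1 (h2.1 hz0))

/-- The image contains every alternating factor: by `co_eq` the `n`-th factor acts trivially on the
other tori, and an injective endomorphism of a finite group is onto. -/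
lemma single_mem_range (hφ : Function.Injective φ) (n : ℕ) (α : Perm (XG n)) (hα : sign α = 1) :
    single XG n α ∈ φ.range.map DG.Γ.subtype := by
  let ψ' : alternatingGroup (XG n) →* alternatingGroup (XG n) :=
    (ψ φ n n).codRestrict _ fun α => even_co n _
  have hinj : Function.Injective ψ' := fun a b hab => diag_injective hφ n (congrArg Subtype.val hab)
  obtain ⟨β, hβ⟩ := Finite.surjective_of_injective hinj ⟨α, hα⟩
  refine ⟨φ (DG.ι n β), ⟨_, rfl⟩, Prod.ext (funext fun m => ?_) (v_phi_eq_zero φ _ rfl)⟩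
  change co φ m (DG.ι n β) = _
  obtain rfl | hm := eq_or_ne m n
  · rw [single_same]
    exact congrArg Subtype.val hβ
  · have h3 : (DG.ι n β).1.1 m = 1 := single_ne hm _
    have h4 : (⟨(DG.ι n β).1.1 m, DG.even (DG.ι n β).2 m⟩ : alternatingGroup (XG m)) = 1 :=
      Subtype.ext h3
    rw [co_eq (diag_injective hφ m), h4, map_one, single_ne hm]

/-- An element that eventually is a fixed three-cycle of the grid lies in the image: by locality,
the conjugators map this three-cycle, infinitely often, to one and the same three-cycle, which is
followed by an element of the group. -/
lemma tc_mem_range (hφ : Function.Injective φ) {g : DG.Γ} (hg : v g.1 = 0) {x y z : ℤ × ℤ}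
    (hxy : x ≠ y) (hyz : y ≠ z) (hxz : x ≠ z)
    (hev : ∀ᶠ m in atTop, g.1.1 m = tc (π m x) (π m y) (π m z)) : g ∈ φ.range := by
  obtain ⟨h, hh⟩ := exists_conjugators hφ
  obtain ⟨R1, hR1⟩ := conjugators_local hφ hh x
  obtain ⟨R2, hR2⟩ := conjugators_local hφ hh y
  obtain ⟨R3, hR3⟩ := conjugators_local hφ hh z
  obtain ⟨a, b, c, habc⟩ : ∃ a b c, ∃ᶠ m in atTop,
      h m (π m x) = π m a ∧ h m (π m y) = π m b ∧ h m (π m z) = π m c := by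
    by_contra hno
    have h1 : ∀ᶠ m in atTop, ∀ a ∈ box R1, ∀ b ∈ box R2, ∀ c ∈ box R3,
        ¬ (h m (π m x) = π m a ∧ h m (π m y) = π m b ∧ h m (π m z) = π m c) :=
      (Finset.eventually_all _).2 fun a _ => (Finset.eventually_all _).2 fun b _ =>
        (Finset.eventually_all _).2 fun c _ => not_frequently.1 fun hf => hno ⟨a, b, c, hf⟩
    obtain ⟨m, h1, h2, h3, h4⟩ := (h1.and (hR1.and (hR2.and hR3))).exists
    obtain ⟨a, ha, ha'⟩ := Finset.mem_image.1 h2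
    obtain ⟨b, hb, hb'⟩ := Finset.mem_image.1 h3
    obtain ⟨c, hc, hc'⟩ := Finset.mem_image.1 h4
    exact h1 a ha b hb c hc ⟨ha'.symm, hb'.symm, hc'.symm⟩
  obtain ⟨m, ⟨ha, hb, hc⟩, h1, h2, h3⟩ := (habc.and_eventually
    ((ev_inj x y).and ((ev_inj y z).and (ev_inj x z)))).exists
  have hab : a ≠ b := by
    rintro rfl
    exact hxy (h1.1 ((h m).injective (ha.trans hb.symm)))
  have hbc : b ≠ c := by
    rintro rfl
    exact hyz (h2.1 ((h m).injective (hb.trans hc.symm)))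
  have hac : a ≠ c := by
    rintro rfl
    exact hxz (h3.1 ((h m).injective (ha.trans hc.symm)))
  obtain ⟨κ, hκ, hκv, hκe⟩ := exists_tc hab hbc hac
  have hfreq : ∃ᶠ m in atTop, (φ ⟨κ, hκ⟩ * g⁻¹).1.1 m = 1 := by
    refine (habc.and_eventually (hκe.and (hev.and hh))).mono ?_
    rintro m ⟨⟨ha, hb, hc⟩, h1, h2, h3⟩
    change co φ m ⟨κ, hκ⟩ * (g.1.1 m)⁻¹ = 1
    rw [mul_inv_eq_one, h2]
    ext1 q
    apply (h m).injective
    rw [h3]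
    change κ.1 m (h m q) = _
    rw [h1, ← ha, ← hb, ← hc, ← tc_conj, Perm.mul_apply, Perm.mul_apply]
    simp
  have hev1 := ev_one_of_freq (φ ⟨κ, hκ⟩ * g⁻¹).2 (by
    change v ((φ ⟨κ, hκ⟩).1 * g.1⁻¹) = 0
    rw [v_mul, v_inv, hg, v_phi_eq_zero φ _ hκv, neg_zero, add_zero]) hfreq
  obtain ⟨n0, hn0⟩ := eventually_atTop.1 hev1
  have : g.1 ∈ φ.range.map DG.Γ.subtype := by
    refine Datum.mem_of_eventually (single_mem_range hφ) (DG.even g.2) (DG.even (φ ⟨κ, hκ⟩).2)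
      ⟨_, ⟨_, rfl⟩, rfl⟩ ?_ (n0 := n0) fun n hn => ?_
    · exact hg.trans (v_phi_eq_zero φ ⟨κ, hκ⟩ hκv).symm
    · exact (mul_inv_eq_one.1 (hn0 n hn)).symm
  obtain ⟨g', hg', he⟩ := this
  exact (Subtype.ext he : g' = g) ▸ hg'

/-- The group of the square tori is co-Hopfian. -/
lemma DG_coHopf (hφ : Function.Injective φ) : Function.Surjective φ := by
  have h0 : ∀ g : DG.Γ, v g.1 = 0 → g ∈ φ.range := by
    refine mem_of_conjs φ.range fun w i j k hij hjk hik => ?_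
    have hne : ∀ {i j : Fin 5}, i ≠ j → pz i + w ≠ pz j + w :=
      fun h h' => pz_inj.ne h (add_right_cancel h')
    refine tc_mem_range hφ ?_ (hne hij) (hne hjk) (hne hik) (.of_forall fun m => ?_)
    · change v (DG.W w * DG.A i j k * (DG.W w)⁻¹) = 0
      rw [v_mul, v_mul, v_inv, v_A]
      abel
    · change (DG.W w).1 m * tc (DG.x m i) (DG.x m j) (DG.x m k) * ((DG.W w).1 m)⁻¹ = _
      rw [tc_conj, DG_W_apply, DG_W_apply, DG_W_apply, DG_x, DG_x, DG_x, map_add, map_add, map_add]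
  intro g
  obtain ⟨w, hw⟩ := v_phi_surjective hφ (v g.1)
  have h1 : g * (φ ⟨_, DG.W_mem w⟩)⁻¹ ∈ φ.range := h0 _ (by
    change v (g.1 * (φ ⟨_, DG.W_mem w⟩).1⁻¹) = 0
    rw [v_mul, v_inv, hw, add_neg_cancel])
  have h2 := φ.range.mul_mem h1 ⟨⟨_, DG.W_mem w⟩, rfl⟩
  rwa [inv_mul_cancel_right] at h2

end Endo
end CoHopf

/-- Co-Hopfianity is not a profinite property: there are finitely generated residually
finite groups with the same finite quotients, one co-Hopfian and the other not. -/
theorem coHopfian_not_profinite :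
    ∃ (G H : Type) (_ : Group G) (_ : Group H),
      Group.FG G ∧ Group.FG H ∧
      IsResiduallyFinite G ∧ IsResiduallyFinite H ∧
      SameFiniteQuotients G H ∧
      IsCoHopfian G ∧ ¬ IsCoHopfian H := by
  refine ⟨CoHopf.DG.Γ, CoHopf.DH.Γ, inferInstance, inferInstance, CoHopf.DG.fg, CoHopf.DH.fg,
    CoHopf.DG.residuallyFinite, CoHopf.DH.residuallyFinite,
    CoHopf.DG.same_finite_quotients CoHopf.DH fun n => (CoHopf.card_eq n).some,
    fun f hf => CoHopf.DG_coHopf hf, fun h => ?_⟩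
  obtain ⟨f, hf, hs⟩ := CoHopf.DH.exists_not_surjective CoHopf.DH_u
  exact hs (h f hf)
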